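/- (Far-from-CMC global supersolution; flat case of Theorem 4.1.) Let n ≥ 3, p > n, γ ∈ (2−n, 0), δ = γ/2. Let F : ℝⁿ → ℝ be smooth and positive with F(x) = ‖x‖^{γ−2} for ‖x‖ ≥ 1, and let Ψ : ℝⁿ → ℝ be smooth with ΔΨ = −F, 1 + Ψ > 0, and a⟨x⟩^{γ} ≤ Ψ(x) ≤ b⟨x⟩^{γ} for some constants 0 < a ≤ b and all x. Let τ be smooth with ‖τ‖_{W^{1,p}_{δ−1}} < ∞. Then there exist constants η > 0 and ε > 0 such that for any smooth symmetric trace-free divergence-free matrix field σ with ‖σ‖_{L^∞_{δ−1}} ≤ ε, any smooth ρ ≥ 0 with ‖ρ‖_{L^∞_{2δ−2}} ≤ ε, and any smooth vector field J with ‖J‖_{L^p_{δ−2}} ≤ ε, the function φ₊ := η(1 + Ψ) is a global supersolution: for every continuous φ with 0 < φ ≤ φ₊ pointwise and every smooth vector field W with ‖W‖_{W^{2,p}_δ} < ∞ solving Δ_L W + ((n−1)/n) φ^N ∇τ + J = 0, one has Δφ₊ + c_n|σ + 𝒟W|² φ₊^{−N−1} − b_n τ² φ₊^{N−1} + c_n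 ρ φ₊^{−N/2} ≤ 0 pointwise. -/

import Mathlib

/-!
The function `φ₊ = η (1 + Ψ)` satisfies `Δφ₊ = -η F`, and `F` dominates a multiple of
`⟨x⟩^{γ-2} = ⟨x⟩^{2δ-2}`. The term `-b_n τ² φ₊^{N-1}` has the good sign, so it is enough that
`|σ + 𝒟W|² φ₊^{-N-1}` and `ρ φ₊^{-N/2}` are small multiples of `η ⟨x⟩^{2δ-2}`. With `ε = η ^ N` the
momentum constraint has data of size `η ^ N`; once `|𝒟W| ≤ C η ^ N ⟨x⟩^{δ-1}` is known, the two terms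
are `O(η^{N-1})` and `O(η^{N/2})` times `⟨x⟩^{2δ-2}`, and `N > 2` lets a small `η` win.

The analytic content is therefore the a priori bound `confKill_bound` on `𝒟W`. One has
`-(Δ_L W)ᵢ = ΔWᵢ + κ ∂ᵢ (div W)` with `κ = 1 - 2/n`, a Lamé operator. It is inverted with the smooth
kernel `Vk`, a Kelvin matrix built from powers of `1 + ‖z‖²`, which the Lamé operator maps to a
multiple of the integrable bump `(1 + ‖z‖²)^{-(n+4)/2}` times the identity (`lame_Vk`). The
derivatives of `Vk` are `O(⟨z⟩^{1-n})`, and the weighted Sobolev bound on `W` makes all the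
integrations by parts legitimate without a cutoff (`lame_identity`). Applying the identity to
`z ↦ W (x + e z)` and letting `e → 0` turns the bump into a point mass and gives
`|∂W(x)| ≤ C ∫ ‖y‖^{1-n} |Δ_L W (x + y)| dy` (`gradient_le_riesz`). Hölder's inequality together
with the decay of `‖·‖^{-A} * ⟨·⟩^{-B}` (`riesz_weight`) bounds this Riesz potential by
`⟨x⟩^{δ-1}` times the `L^p_{δ-2}` norm of the data (`riesz_holder`).
-/

noncomputable section

open MeasureTheory Filter
open scoped ENNReal Topology

/-- `n`-dimensional Euclidean space. -/
abbrev Euc (n : ℕ) := EuclideanSpace ℝ (Fin n)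

/-- The Japanese bracket `⟨x⟩ = (1 + ‖x‖²)^(1/2)`. -/
def jap {n : ℕ} (x : Euc n) : ℝ := Real.sqrt (1 + ‖x‖ ^ 2)

/-- Partial derivative `∂ᵢ f` of a real-valued function. -/
def pd {n : ℕ} (i : Fin n) (f : Euc n → ℝ) (x : Euc n) : ℝ :=
  fderiv ℝ f x (EuclideanSpace.single i 1)

/-- The Euclidean Laplacian `Δf = Σᵢ ∂ᵢ²f`. -/
def lap {n : ℕ} (f : Euc n → ℝ) (x : Euc n) : ℝ :=
  ∑ i, pd i (pd i f) x

/-- Divergence of a vector field. -/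
def divg {n : ℕ} (W : Euc n → Euc n) (x : Euc n) : ℝ :=
  ∑ i, pd i (fun y => W y i) x

/-- The conformal Killing operator `(𝒟W)ᵢⱼ = ∂ᵢWⱼ + ∂ⱼWᵢ − (2/n)(div W)δᵢⱼ`. -/
def confKill {n : ℕ} (W : Euc n → Euc n) (x : Euc n) : Matrix (Fin n) (Fin n) ℝ :=
  Matrix.of fun i j =>
    pd i (fun y => W y j) x + pd j (fun y => W y i) x
      - (2 / (n : ℝ)) * divg W x * (if i = j then 1 else 0)

/-- The Frobenius norm of a matrix. -/
def frob {n : ℕ} (M : Matrix (Fin n) (Fin n) ℝ) : ℝ :=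
  Real.sqrt (∑ i, ∑ j, (M i j) ^ 2)

/-- The vector Laplacian `(Δ_L W)ⱼ = −Σᵢ ∂ᵢ (𝒟W)ᵢⱼ`. -/
def vecLap {n : ℕ} (W : Euc n → Euc n) (x : Euc n) : Euc n :=
  (EuclideanSpace.equiv (Fin n) ℝ).symm
    (fun j => -∑ i, pd i (fun y => confKill W y i j) x)

/-- Weighted `L^p_δ` norm (as an extended nonnegative real). -/
def LpW {n : ℕ} {F : Type*} [NormedAddCommGroup F] (p δ : ℝ) (f : Euc n → F) : ℝ≥0∞ :=
  (∫⁻ x, ENNReal.ofReal ((jap x ^ (-δ - (n : ℝ) / p) * ‖f x‖) ^ p)) ^ (1 / p)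

/-- Weighted Sobolev `W^{k,p}_δ` norm. -/
def SobW {n : ℕ} {F : Type*} [NormedAddCommGroup F] [NormedSpace ℝ F]
    (k : ℕ) (p δ : ℝ) (f : Euc n → F) : ℝ≥0∞ :=
  ∑ j ∈ Finset.range (k + 1),
    (∫⁻ x, ENNReal.ofReal
      ((jap x ^ (-δ - (n : ℝ) / p + (j : ℝ)) * ‖iteratedFDeriv ℝ j f x‖) ^ p)) ^ (1 / p)

/-- Weighted `L^∞_δ` norm. -/
def LinfW {n : ℕ} {F : Type*} [NormedAddCommGroup F] (δ : ℝ) (f : Euc n → F) : ℝ≥0∞ :=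
  ⨆ x, ENNReal.ofReal (jap x ^ (-δ) * ‖f x‖)

/-- Weighted `L^∞_δ` norm of a matrix field, pointwise Frobenius norm. -/
def LinfWM {n : ℕ} (δ : ℝ) (σ : Euc n → Matrix (Fin n) (Fin n) ℝ) : ℝ≥0∞ :=
  ⨆ x, ENNReal.ofReal (jap x ^ (-δ) * frob (σ x))

/-- `N = 2n/(n−2)`. -/
def Nc (n : ℕ) : ℝ := 2 * n / ((n : ℝ) - 2)
/-- `c_n = (n−2)/(4(n−1))`. -/
def cc (n : ℕ) : ℝ := ((n : ℝ) - 2) / (4 * ((n : ℝ) - 1))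
/-- `b_n = (n−2)/(4n)`. -/
def bc (n : ℕ) : ℝ := ((n : ℝ) - 2) / (4 * (n : ℝ))

/-- Componentwise smoothness of a matrix field. -/
def SmoothMat {n : ℕ} (σ : Euc n → Matrix (Fin n) (Fin n) ℝ) : Prop :=
  ∀ i j, ContDiff ℝ (⊤ : ℕ∞) fun x => σ x i j

/-- A matrix field is symmetric, trace-free and divergence-free. -/
def SymTT {n : ℕ} (σ : Euc n → Matrix (Fin n) (Fin n) ℝ) : Prop :=
  (∀ x i j, σ x i j = σ x j i) ∧ (∀ x, ∑ i, σ x i i = 0) ∧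
    (∀ x j, ∑ i, pd i (fun y => σ y i j) x = 0)

/-- The left-hand side of the Lichnerowicz (Hamiltonian) equation (i). -/
def HamExpr {n : ℕ} (τ : Euc n → ℝ) (σ : Euc n → Matrix (Fin n) (Fin n) ℝ)
    (ρ : Euc n → ℝ) (u : Euc n → ℝ) (W : Euc n → Euc n) (x : Euc n) : ℝ :=
  lap u x + cc n * frob (σ x + confKill W x) ^ 2 * u x ^ (-(Nc n) - 1)
    - bc n * τ x ^ 2 * u x ^ (Nc n - 1) + cc n * ρ x * u x ^ (-(Nc n) / 2)

/-- Equation (i): the Lichnerowicz equation. -/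
def HamEq {n : ℕ} (τ : Euc n → ℝ) (σ : Euc n → Matrix (Fin n) (Fin n) ℝ)
    (ρ : Euc n → ℝ) (u : Euc n → ℝ) (W : Euc n → Euc n) : Prop :=
  ∀ x, HamExpr τ σ ρ u W x = 0

/-- Equation (ii): the momentum constraint `Δ_L W + ((n−1)/n) u^N ∇τ + J = 0`. -/
def MomEq {n : ℕ} (τ : Euc n → ℝ) (J : Euc n → Euc n)
    (u : Euc n → ℝ) (W : Euc n → Euc n) : Prop :=
  ∀ x, vecLap W x + ((((n : ℝ) - 1) / n) * u x ^ Nc n) • gradient τ x + J x = 0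

/-- Global supersolution property for `φ₊`. -/
def GlobalSuperSol {n : ℕ} (p δ : ℝ) (τ : Euc n → ℝ)
    (σ : Euc n → Matrix (Fin n) (Fin n) ℝ) (ρ : Euc n → ℝ) (J : Euc n → Euc n)
    (φp : Euc n → ℝ) : Prop :=
  ∀ φ : Euc n → ℝ, Continuous φ → (∀ x, 0 < φ x ∧ φ x ≤ φp x) →
    ∀ W : Euc n → Euc n, ContDiff ℝ (⊤ : ℕ∞) W → SobW 2 p δ W < ⊤ → MomEq τ J φ W →
    ∀ x, HamExpr τ σ ρ φp W x ≤ 0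

/-- Global subsolution property for `φ₋`. -/
def GlobalSubSol {n : ℕ} (p δ : ℝ) (τ : Euc n → ℝ)
    (σ : Euc n → Matrix (Fin n) (Fin n) ℝ) (ρ : Euc n → ℝ) (J : Euc n → Euc n)
    (φm : Euc n → ℝ) : Prop :=
  ∀ φ : Euc n → ℝ, Continuous φ → (∀ x, φm x ≤ φ x) →
    ∀ W : Euc n → Euc n, ContDiff ℝ (⊤ : ℕ∞) W → SobW 2 p δ W < ⊤ → MomEq τ J φ W →
    ∀ x, 0 ≤ HamExpr τ σ ρ φm W x

/-! ### Partial derivatives and the Japanese bracket -/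

/-- Infinite differentiability, at the regularity used throughout. -/
abbrev Smooth {n : ℕ} (f : Euc n → ℝ) : Prop := ContDiff ℝ (⊤ : ℕ∞) f

lemma Smooth.diff {n : ℕ} {f : Euc n → ℝ} (hf : Smooth f) : Differentiable ℝ f :=
  ContDiff.differentiable hf (by simp)

lemma Smooth.pd {n : ℕ} {f : Euc n → ℝ} (hf : Smooth f) (i : Fin n) : Smooth (pd i f) := by
  have : ContDiff ℝ (⊤ : ℕ∞) (fderiv ℝ f) := ContDiff.fderiv_right hf (by simp)
  exact this.clm_apply contDiff_const

lemma Smooth.comp_coord {n : ℕ} {W : Euc n → Euc n} (hW : ContDiff ℝ (⊤ : ℕ∞) W) (i : Fin n) :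
    Smooth (fun y => W y i) :=
  (EuclideanSpace.proj (𝕜 := ℝ) i).contDiff.comp hW

section pdrules
variable {n : ℕ} {f g : Euc n → ℝ}

lemma pd_add (hf : Smooth f) (hg : Smooth g) (i : Fin n) :
    pd i (fun x => f x + g x) = fun x => pd i f x + pd i g x := by
  funext x
  simp [pd, fderiv_fun_add (hf.diff x) (hg.diff x)]

lemma pd_mul (hf : Smooth f) (hg : Smooth g) (i : Fin n) :
    pd i (fun x => f x * g x) = fun x => pd i f x * g x + f x * pd i g x := by
  funext x
  simp only [pd, fderiv_fun_mul (hf.diff x) (hg.diff x)]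
  simp; ring

lemma pd_const (c : ℝ) (i : Fin n) : pd i (fun _ : Euc n => c) = fun _ => 0 := by
  funext x
  simp [pd]

lemma pd_const_mul (hf : Smooth f) (c : ℝ) (i : Fin n) :
    pd i (fun x => c * f x) = fun x => c * pd i f x := by
  rw [pd_mul contDiff_const hf, pd_const]; simp

lemma pd_sum {ι : Type*} (s : Finset ι) {f : ι → Euc n → ℝ} (hf : ∀ a, Smooth (f a)) (i : Fin n) :
    pd i (fun x => ∑ a ∈ s, f a x) = fun x => ∑ a ∈ s, pd i (f a) x := by
  funext x
  simp only [pd]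
  rw [fderiv_fun_sum (fun a _ => (hf a).diff x)]
  simp

lemma pd_comm (hf : Smooth f) (i j : Fin n) : pd i (pd j f) = pd j (pd i f) := by
  funext x
  have h1 : ∀ k l : Fin n, pd k (pd l f) x
      = fderiv ℝ (fderiv ℝ f) x (EuclideanSpace.single k 1) (EuclideanSpace.single l 1) := by
    intro k l
    have hd : DifferentiableAt ℝ (fderiv ℝ f) x :=
      (ContDiff.fderiv_right (m := (⊤ : ℕ∞)) hf (by simp)).differentiable (by simp) x
    have := (hd.hasFDerivAt.clm_apply (hasFDerivAt_const (EuclideanSpace.single l (1 : ℝ)) x)).fderiv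
    simp only [pd]
    unfold pd
    rw [this]
    simp
  rw [h1, h1]
  exact (ContDiffAt.isSymmSndFDerivAt (n := (⊤ : ℕ∞)) hf.contDiffAt (by
    rw [minSmoothness_of_isRCLikeNormedField]
    exact WithTop.coe_le_coe.2 (le_top (a := (2 : ℕ∞))))) _ _

lemma pd_affine (hf : Smooth f) (x : Euc n) (e : ℝ) (i : Fin n) :
    pd i (fun z => f (x + e • z)) = fun z => e * pd i f (x + e • z) := by
  funext z
  have h1 : HasFDerivAt (fun z : Euc n => x + e • z) (e • ContinuousLinearMap.id ℝ (Euc n)) z :=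
    ((hasFDerivAt_id z).const_smul e).const_add x
  have := ((hf.diff (x + e • z)).hasFDerivAt.comp z h1).fderiv
  simp only [pd]
  rw [show (fun z => f (x + e • z)) = f ∘ (fun z : Euc n => x + e • z) from rfl, this]
  simp

lemma Smooth.affine (hf : Smooth f) (x : Euc n) (e : ℝ) : Smooth (fun z => f (x + e • z)) := by
  unfold Smooth at *
  fun_prop

end pdrules

section japlemmas
variable {n : ℕ}

lemma one_le_jap (x : Euc n) : 1 ≤ jap x := by
  unfold jap
  rw [Real.one_le_sqrt]
  nlinarith [sq_nonneg ‖x‖]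

lemma jap_pos (x : Euc n) : 0 < jap x := lt_of_lt_of_le one_pos (one_le_jap x)

lemma norm_le_jap (x : Euc n) : ‖x‖ ≤ jap x :=
  Real.le_sqrt_of_sq_le (by linarith)

lemma jap_sq (x : Euc n) : jap x ^ 2 = 1 + ‖x‖ ^ 2 := Real.sq_sqrt (by positivity)

lemma continuous_jap : Continuous (jap : Euc n → ℝ) := by
  unfold jap; fun_prop

lemma continuous_jap_rpow (a : ℝ) : Continuous (fun x : Euc n => jap x ^ a) :=
  continuous_jap.rpow_const (fun x => Or.inl (jap_pos x).ne')

lemma jap_le_add (x y : Euc n) : jap x ≤ ‖x - y‖ + jap y := by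
  have h1 : ‖x‖ ≤ ‖x - y‖ + ‖y‖ := by simpa using norm_add_le (x - y) y
  have h2 := norm_le_jap y
  have h3 := jap_sq y
  have := jap_pos y
  unfold jap
  rw [Real.sqrt_le_left (by positivity)]
  change 1 + ‖x‖ ^ 2 ≤ (‖x - y‖ + jap y) ^ 2
  nlinarith [norm_nonneg (x - y), norm_nonneg x, norm_nonneg y]

end japlemmas

/-! ### Symbols: functions whose derivatives gain decay -/

/-- The power `(1 + ‖z‖²)^a`. -/
def Sp {n : ℕ} (a : ℝ) (z : Euc n) : ℝ := (1 + ‖z‖ ^ 2) ^ a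

section sp
variable {n : ℕ}

lemma Sp_pos (a : ℝ) (z : Euc n) : 0 < Sp a z := by unfold Sp; positivity

lemma Sp_eq_jap (a : ℝ) (z : Euc n) : Sp a z = jap z ^ (2 * a) := by
  unfold Sp
  rw [Real.rpow_mul (jap_pos z).le]
  norm_cast
  rw [jap_sq]

lemma Sp_smooth (a : ℝ) : Smooth (Sp a : Euc n → ℝ) := by
  unfold Sp
  have : ContDiff ℝ (⊤ : ℕ∞) (fun z : Euc n => 1 + ‖z‖ ^ 2) :=
    contDiff_const.add (contDiff_norm_sq ℝ)
  exact this.rpow_const_of_ne (fun z => by positivity)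

lemma coord_smooth (i : Fin n) : Smooth (fun z : Euc n => z i) :=
  (EuclideanSpace.proj (𝕜 := ℝ) i).contDiff

lemma pd_coord (i j : Fin n) :
    pd i (fun z : Euc n => z j) = fun _ => if i = j then 1 else 0 := by
  funext x
  have := (EuclideanSpace.proj j : Euc n →L[ℝ] ℝ).hasFDerivAt (x := x)
  have h2 := this.fderiv
  change (fderiv ℝ (fun z : Euc n => z j) x) (EuclideanSpace.single i 1) = _
  change (fderiv ℝ (fun z : Euc n => z j) x) = _ at h2
  rw [h2]
  simp [eq_comm]

lemma pd_Sp (a : ℝ) (i : Fin n) :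
    pd i (Sp a : Euc n → ℝ) = fun z => 2 * a * (z i * Sp (a - 1) z) := by
  funext z
  have h1 : HasFDerivAt (fun z : Euc n => 1 + ‖z‖ ^ 2) (2 • (innerSL ℝ z)) z :=
    (hasStrictFDerivAt_norm_sq z).hasFDerivAt.const_add 1
  have h2 := (h1.rpow_const (p := a) (Or.inl (by positivity))).fderiv
  change fderiv ℝ (fun z : Euc n => (1 + ‖z‖ ^ 2) ^ a) z _ = _
  rw [h2]
  simp [Sp, EuclideanSpace.inner_single_right]
  ring

/-- `Symb m f`: `f` lies in the algebra generated by the coordinates and the powers of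
`1 + ‖z‖²`, graded by the order of growth `m` at infinity. Differentiation lowers the order
by one (`Symb.pd`), and a function of order `m` is `O(⟨z⟩^m)` (`Symb.bound`). -/
inductive Symb : ℝ → (Euc n → ℝ) → Prop
  | zero (m : ℝ) : Symb m (fun _ => 0)
  | const (c : ℝ) : Symb 0 (fun _ => c)
  | coord (i : Fin n) : Symb 1 (fun z => z i)
  | power (a : ℝ) : Symb (2 * a) (Sp a)
  | add {m : ℝ} {f g : Euc n → ℝ} : Symb m f → Symb m g → Symb m (fun z => f z + g z)
  | mul {m m' : ℝ} {f g : Euc n → ℝ} : Symb m f → Symb m' g → Symb (m + m') (fun z => f z * g z)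

lemma Symb.smooth {m : ℝ} {f : Euc n → ℝ} (h : Symb m f) : Smooth f := by
  induction h with
  | zero => exact contDiff_const
  | const => exact contDiff_const
  | coord i => exact coord_smooth i
  | power a => exact Sp_smooth a
  | add _ _ h1 h2 => exact ContDiff.add h1 h2
  | mul _ _ h1 h2 => exact ContDiff.mul h1 h2

lemma Symb.of_eq {m m' : ℝ} {f g : Euc n → ℝ} (h : Symb m f) (hm : m = m') (hf : f = g) :
    Symb m' g := by subst hm hf; exact h

lemma Symb.const_mul {m : ℝ} {f : Euc n → ℝ} (c : ℝ) (h : Symb m f) :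
    Symb m (fun z => c * f z) := ((Symb.const c).mul h).of_eq (by ring) rfl

lemma Symb.sum {ι : Type*} (s : Finset ι) {m : ℝ} {f : ι → Euc n → ℝ} (h : ∀ a, Symb m (f a)) :
    Symb m (fun z => ∑ a ∈ s, f a z) := by
  classical
  induction s using Finset.induction_on with
  | empty => simpa using Symb.zero m
  | insert a s ha ih => simpa [Finset.sum_insert ha] using (h a).add ih

lemma Symb.pd {m : ℝ} {f : Euc n → ℝ} (h : Symb m f) (i : Fin n) : Symb (m - 1) (pd i f) := by
  induction h with
  | zero m => rw [pd_const]; exact Symb.zero _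
  | const c => rw [pd_const]; exact Symb.zero _
  | coord j => rw [pd_coord]; exact (Symb.const _).of_eq (by ring) rfl
  | power a =>
    rw [pd_Sp]
    exact (Symb.const_mul (2 * a) ((Symb.coord i).mul (Symb.power (a - 1)))).of_eq (by ring) rfl
  | add h1 h2 ih1 ih2 => rw [pd_add h1.smooth h2.smooth]; exact ih1.add ih2
  | mul h1 h2 ih1 ih2 =>
    rw [pd_mul h1.smooth h2.smooth]
    exact ((ih1.mul h2).of_eq (by ring) rfl).add ((h1.mul ih2).of_eq (by ring) rfl)

lemma Symb.bound {m : ℝ} {f : Euc n → ℝ} (h : Symb m f) :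
    ∃ C, 0 ≤ C ∧ ∀ z, |f z| ≤ C * jap z ^ m := by
  induction h with
  | zero m =>
    exact ⟨0, le_rfl, fun z => by simp⟩
  | const c => exact ⟨|c|, abs_nonneg _, fun z => by simp⟩
  | coord i =>
    refine ⟨1, zero_le_one, fun z => ?_⟩
    simpa using (PiLp.norm_apply_le z i).trans (norm_le_jap z)
  | power a =>
    refine ⟨1, zero_le_one, fun z => ?_⟩
    rw [abs_of_pos (Sp_pos a z), Sp_eq_jap, one_mul]
  | add _ _ ih1 ih2 =>
    obtain ⟨C, hC, h1⟩ := ih1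
    obtain ⟨D, hD, h2⟩ := ih2
    refine ⟨C + D, by positivity, fun z => (abs_add_le _ _).trans ?_⟩
    rw [add_mul]; exact add_le_add (h1 z) (h2 z)
  | mul _ _ ih1 ih2 =>
    obtain ⟨C, hC, h1⟩ := ih1
    obtain ⟨D, hD, h2⟩ := ih2
    refine ⟨C * D, by positivity, fun z => ?_⟩
    rw [abs_mul, Real.rpow_add (jap_pos z)]
    calc _ ≤ _ := mul_le_mul (h1 z) (h2 z) (abs_nonneg _) ((abs_nonneg _).trans (h1 z))
      _ = _ := by ring

/-- A function of order `m` is also bounded by any larger power of `⟨z⟩`. -/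
lemma Symb.bound_le {m m' : ℝ} {f : Euc n → ℝ} (h : Symb m f) (hm : m ≤ m') :
    ∃ C, 0 ≤ C ∧ ∀ z, |f z| ≤ C * jap z ^ m' := by
  obtain ⟨C, hC, hb⟩ := h.bound
  refine ⟨C, hC, fun z => (hb z).trans ?_⟩
  gcongr
  exact one_le_jap z

end sp

/-! ### A regularised fundamental solution of the Lamé operator -/

/-- The Lamé parameter `κ = 1 - 2/n`: one has `-(Δ_L W)ᵢ = ΔWᵢ + κ ∂ᵢ (div W)`. -/
def kap (n : ℕ) : ℝ := 1 - 2 / (n : ℝ)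

/-- `q_j = z_j (1 + ‖z‖²)^{(2-n)/2}`, the gradient of a regularised biharmonic potential. -/
def qk {n : ℕ} (j : Fin n) (z : Euc n) : ℝ := z j * Sp ((2 - (n : ℝ)) / 2) z

/-- The divergence of `q` in closed form. -/
def Pk {n : ℕ} (z : Euc n) : ℝ :=
  2 * Sp ((2 - (n : ℝ)) / 2) z + ((n : ℝ) - 2) * Sp (-(n : ℝ) / 2) z

/-- The `j`-th column (with components indexed by `i`) of the regularised Kelvin matrix
`(1 + κ) δᵢⱼ ΔB - κ ∂ᵢ∂ⱼB`, where `∇B = q`. -/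
def Vk {n : ℕ} (j i : Fin n) (z : Euc n) : ℝ :=
  ((1 + kap n) * if i = j then 1 else 0) * Pk z + (-kap n) * pd i (qk j) z

section kernel
variable {n : ℕ}

lemma sum_coord_sq (z : Euc n) : ∑ i, z i * z i = ‖z‖ ^ 2 := by
  rw [EuclideanSpace.norm_sq_eq]
  simp [sq]

lemma Sp_succ (a : ℝ) (z : Euc n) : Sp (a + 1) z = (1 + ‖z‖ ^ 2) * Sp a z := by
  unfold Sp
  rw [Real.rpow_add (by positivity), Real.rpow_one, mul_comm]

lemma qk_symb (j : Fin n) : Symb (3 - (n : ℝ)) (qk j) :=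
  ((Symb.coord j).mul (Symb.power ((2 - (n : ℝ)) / 2))).of_eq (by ring) rfl

lemma pd_qk (i j : Fin n) : pd i (qk j) = fun z : Euc n =>
    (if i = j then 1 else 0) * Sp ((2 - (n : ℝ)) / 2) z
      + (2 - (n : ℝ)) * (z i * z j) * Sp (-(n : ℝ) / 2) z := by
  have := pd_mul (coord_smooth j) (Sp_smooth (n := n) ((2 - (n : ℝ)) / 2)) i
  rw [pd_coord, pd_Sp] at this
  change pd i (fun z => z j * Sp ((2 - (n : ℝ)) / 2) z) = _
  rw [this, show (2 - (n : ℝ)) / 2 - 1 = -(n : ℝ) / 2 by ring]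
  funext z
  ring

lemma pd_qk_symm (i j : Fin n) : pd i (qk j : Euc n → ℝ) = pd j (qk i) := by
  rw [pd_qk, pd_qk]
  funext z
  rw [mul_comm (z i) (z j)]
  simp only [eq_comm]

lemma sum_pd_qk : (fun z : Euc n => ∑ i, pd i (qk i) z) = Pk := by
  funext z
  simp only [pd_qk, if_true, one_mul, Finset.sum_add_distrib, Finset.sum_const, Finset.card_univ,
    Fintype.card_fin, nsmul_eq_mul, ← Finset.sum_mul, ← Finset.mul_sum, sum_coord_sq]
  have := Sp_succ (-(n : ℝ) / 2) z
  rw [show -(n : ℝ) / 2 + 1 = (2 - (n : ℝ)) / 2 by ring] at this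
  unfold Pk
  rw [this]
  ring

lemma Pk_symb : Symb (2 - (n : ℝ)) (Pk : Euc n → ℝ) :=
  (Symb.sum Finset.univ (fun i => (qk_symb i).pd i)).of_eq (by ring) sum_pd_qk

lemma lap_Sp (a : ℝ) (z : Euc n) : lap (Sp a) z =
    2 * a * n * Sp (a - 1) z + 4 * a * (a - 1) * (Sp (a - 1) z - Sp (a - 2) z) := by
  have h1 : ∀ i : Fin n, pd i (pd i (Sp a)) z =
      2 * a * (Sp (a - 1) z + 2 * (a - 1) * (z i * z i) * Sp (a - 2) z) := by
    intro i
    have := pd_mul (coord_smooth i) (Sp_smooth (n := n) (a - 1)) i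
    rw [pd_coord, pd_Sp] at this
    rw [pd_Sp, pd_const_mul ((coord_smooth i).mul (Sp_smooth (a - 1))), this,
      show a - 1 - 1 = a - 2 by ring]
    simp only [if_true]
    ring
  unfold lap
  simp only [h1, ← Finset.mul_sum, Finset.sum_add_distrib, ← Finset.sum_mul, sum_coord_sq,
    Finset.sum_const, Finset.card_univ, Fintype.card_fin, nsmul_eq_mul]
  have := Sp_succ (a - 2) z
  rw [show a - 2 + 1 = a - 1 by ring] at this
  rw [this]
  ring

/-- `Pk` is a regularised Newtonian potential: its Laplacian is a negative multiple of an
integrable bump. -/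
lemma lap_Pk (z : Euc n) :
    lap Pk z = -((n : ℝ) * (n - 2) * (n + 2)) * Sp (-((n : ℝ) + 4) / 2) z := by
  have h : ∀ a : ℝ, Smooth (Sp a : Euc n → ℝ) := Sp_smooth
  have h1 : lap (Pk : Euc n → ℝ) z =
      2 * lap (Sp ((2 - (n : ℝ)) / 2)) z + ((n : ℝ) - 2) * lap (Sp (-(n : ℝ) / 2)) z := by
    unfold lap
    rw [Finset.mul_sum, Finset.mul_sum, ← Finset.sum_add_distrib]
    refine Finset.sum_congr rfl fun i _ => ?_
    change pd i (pd i (fun z : Euc n => 2 * Sp ((2 - (n : ℝ)) / 2) z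
      + ((n : ℝ) - 2) * Sp (-(n : ℝ) / 2) z)) z = _
    rw [pd_add (contDiff_const.mul (h _)) (contDiff_const.mul (h _)), pd_const_mul (h _),
      pd_const_mul (h _), pd_add (contDiff_const.mul ((h _).pd i)) (contDiff_const.mul ((h _).pd i)),
      pd_const_mul ((h _).pd i), pd_const_mul ((h _).pd i)]
  rw [h1, lap_Sp, lap_Sp]
  rw [show (2 - (n : ℝ)) / 2 - 1 = -(n : ℝ) / 2 by ring,
    show (2 - (n : ℝ)) / 2 - 2 = -((n : ℝ) + 2) / 2 by ring,
    show -(n : ℝ) / 2 - 1 = -((n : ℝ) + 2) / 2 by ring,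
    show -(n : ℝ) / 2 - 2 = -((n : ℝ) + 4) / 2 by ring]
  ring

lemma Vk_symb (j i : Fin n) : Symb (2 - (n : ℝ)) (Vk j i : Euc n → ℝ) :=
  (Pk_symb.const_mul _).add ((((qk_symb j).pd i).of_eq (by ring) rfl).const_mul _)

lemma Vk_bound : ∃ C, 0 < C ∧ ∀ (j i k : Fin n) (z : Euc n),
    |pd k (Vk j i) z| ≤ C * jap z ^ (1 - (n : ℝ)) ∧
    ∀ l, |pd l (pd k (Vk j i)) z| ≤ C * jap z ^ (1 - (n : ℝ)) := by
  have h1 : ∀ j i k : Fin n, ∃ C, 0 ≤ C ∧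
      ∀ z : Euc n, |pd k (Vk j i) z| ≤ C * jap z ^ (1 - (n : ℝ)) :=
    fun j i k => ((Vk_symb j i).pd k).bound_le (by linarith)
  have h2 : ∀ j i k l : Fin n, ∃ C, 0 ≤ C ∧
      ∀ z : Euc n, |pd l (pd k (Vk j i)) z| ≤ C * jap z ^ (1 - (n : ℝ)) :=
    fun j i k l => (((Vk_symb j i).pd k).pd l).bound_le (by linarith)
  choose C1 hC1 hb1 using h1
  choose C2 hC2 hb2 using h2
  refine ⟨1 + ∑ j, ∑ i, ∑ k, (C1 j i k + ∑ l, C2 j i k l), ?_, fun j i k z => ?_⟩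
  · have : 0 ≤ ∑ j, ∑ i, ∑ k, (C1 j i k + ∑ l, C2 j i k l) :=
      Finset.sum_nonneg fun j _ => Finset.sum_nonneg fun i _ => Finset.sum_nonneg fun k _ =>
        add_nonneg (hC1 j i k) (Finset.sum_nonneg fun l _ => hC2 j i k l)
    linarith
  have hkey : C1 j i k + ∑ l, C2 j i k l ≤ ∑ j, ∑ i, ∑ k, (C1 j i k + ∑ l, C2 j i k l) := by
    have hn : ∀ j i k, 0 ≤ C1 j i k + ∑ l, C2 j i k l := fun j i k =>
      add_nonneg (hC1 j i k) (Finset.sum_nonneg fun l _ => hC2 j i k l)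
    calc _ ≤ ∑ k, (C1 j i k + ∑ l, C2 j i k l) :=
          Finset.single_le_sum (f := fun k => C1 j i k + ∑ l, C2 j i k l)
            (fun k _ => hn j i k) (Finset.mem_univ k)
      _ ≤ ∑ i, ∑ k, (C1 j i k + ∑ l, C2 j i k l) :=
          Finset.single_le_sum (f := fun i => ∑ k, (C1 j i k + ∑ l, C2 j i k l))
            (fun i _ => Finset.sum_nonneg fun k _ => hn j i k) (Finset.mem_univ i)
      _ ≤ _ := Finset.single_le_sum (f := fun j => ∑ i, ∑ k, (C1 j i k + ∑ l, C2 j i k l))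
            (fun j _ => Finset.sum_nonneg fun i _ => Finset.sum_nonneg fun k _ => hn j i k)
            (Finset.mem_univ j)
  have hs : 0 ≤ ∑ l, C2 j i k l := Finset.sum_nonneg fun l _ => hC2 j i k l
  have hj : 0 ≤ jap z ^ (1 - (n : ℝ)) := Real.rpow_nonneg (jap_pos z).le _
  refine ⟨(hb1 j i k z).trans (mul_le_mul_of_nonneg_right (by linarith) hj), fun l =>
    (hb2 j i k l z).trans (mul_le_mul_of_nonneg_right ?_ hj)⟩
  have h3 := Finset.single_le_sum (f := fun l => C2 j i k l) (fun l _ => hC2 j i k l)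
    (Finset.mem_univ l)
  have h4 := hC1 j i k
  linarith

/-- The Lamé operator `ΔWᵢ + κ ∂ᵢ (div W)` in components. -/
def lame {n : ℕ} (W : Fin n → Euc n → ℝ) (i : Fin n) (z : Euc n) : ℝ :=
  ∑ a, (pd a (pd a (W i)) z + kap n * pd i (pd a (W a)) z)

/-- Galerkin's identity: the Lamé operator turns the `j`-th column of the regularised Kelvin
matrix into `(1 + κ) (Δ Pk) eⱼ`. -/
lemma lame_Vk (j i : Fin n) (z : Euc n) :
    lame (Vk j) i z = ((1 + kap n) * if i = j then 1 else 0) * lap Pk z := by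
  have hP : Smooth (Pk : Euc n → ℝ) := Pk_symb.smooth
  have hq : ∀ j : Fin n, Smooth (qk j) := fun j => (qk_symb j).smooth
  have hV2 : ∀ a b c : Fin n, pd a (pd b (Vk j c)) = fun z =>
      ((1 + kap n) * if c = j then 1 else 0) * pd a (pd b Pk) z
        + (-kap n) * pd a (pd b (pd c (qk j))) z := by
    intro a b c
    change pd a (pd b (fun z : Euc n => ((1 + kap n) * if c = j then 1 else 0) * Pk z
      + (-kap n) * pd c (qk j) z)) = _
    rw [pd_add (contDiff_const.mul hP) (contDiff_const.mul ((hq j).pd c)), pd_const_mul hP,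
      pd_const_mul ((hq j).pd c),
      pd_add (contDiff_const.mul (hP.pd b)) (contDiff_const.mul (((hq j).pd c).pd b)),
      pd_const_mul (hP.pd b), pd_const_mul (((hq j).pd c).pd b)]
  -- both third-order sums collapse to `∂ᵢ∂ⱼP`, because `∂ₐqⱼ = ∂ⱼqₐ` and `Σₐ ∂ₐqₐ = P`
  have hsum : ∑ a, pd i (pd a (pd a (qk j))) z = pd i (pd j Pk) z := by
    rw [← sum_pd_qk, pd_sum _ (fun a => (hq a).pd a), pd_sum _ (fun a => ((hq a).pd a).pd j)]
    refine Finset.sum_congr rfl fun a _ => ?_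
    rw [pd_qk_symm a j, pd_comm (hq a) a j]
  have hsum' : ∑ a, pd a (pd a (pd i (qk j))) z = pd i (pd j Pk) z := by
    rw [← hsum]
    refine Finset.sum_congr rfl fun a _ => ?_
    rw [pd_comm (hq j) a i, pd_comm ((hq j).pd a) a i]
  unfold lame
  simp only [hV2, Finset.sum_add_distrib, ← Finset.mul_sum, hsum, hsum', lap]
  have : ∑ a, ((1 + kap n) * if a = j then 1 else 0) * pd i (pd a Pk) z
      = (1 + kap n) * pd i (pd j Pk) z := by
    rw [Finset.sum_eq_single j]
    · simp
    · intro b _ hb; simp [hb]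
    · simp
  rw [this]
  ring

end kernel

/-! ### Integration by parts against the kernel -/

/-- A smooth function whose first and second derivatives are integrable against `⟨z⟩^{1-n}`. -/
structure Good {n : ℕ} (w : Euc n → ℝ) : Prop where
  smooth : Smooth w
  int1 : ∀ a, Integrable (fun z => pd a w z * jap z ^ (1 - (n : ℝ)))
  int2 : ∀ a b, Integrable (fun z => pd a (pd b w) z * jap z ^ (1 - (n : ℝ)))

section ibp
variable {n : ℕ}

lemma integrable_mul_of_bound {f g : Euc n → ℝ} (hf : Continuous f) (hg : Continuous g)
    (hfi : Integrable (fun z => f z * jap z ^ (1 - (n : ℝ)))) {C : ℝ}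
    (hb : ∀ z, |g z| ≤ C * jap z ^ (1 - (n : ℝ))) : Integrable (fun z => f z * g z) := by
  refine (hfi.norm.const_mul C).mono' (hf.mul hg).aestronglyMeasurable
    (Eventually.of_forall fun z => ?_)
  have hj : 0 ≤ jap z ^ (1 - (n : ℝ)) := Real.rpow_nonneg (jap_pos z).le _
  simp only [norm_mul, Real.norm_eq_abs, abs_of_nonneg hj]
  calc |f z| * |g z| ≤ |f z| * (C * jap z ^ (1 - (n : ℝ))) := by gcongr; exact hb z
    _ = _ := by ring

/-- Three integrations by parts, arranged so that at least one derivative stays on each factor;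
all the boundary-free integrands then decay. -/
lemma ibp_three {w v : Euc n → ℝ} (hw : Good w) (hv : Smooth v) {C : ℝ}
    (h1 : ∀ k z, |pd k v z| ≤ C * jap z ^ (1 - (n : ℝ)))
    (h2 : ∀ k l z, |pd l (pd k v) z| ≤ C * jap z ^ (1 - (n : ℝ))) (a b k : Fin n) :
    ∫ z, pd a (pd b w) z * pd k v z = -∫ z, pd k w z * pd b (pd a v) z := by
  have key : ∀ a b k : Fin n,
      ∫ z, pd b w z * pd a (pd k v) z = -∫ z, pd a (pd b w) z * pd k v z := by
    intro a b k
    refine integral_mul_fderiv_eq_neg_fderiv_mul_of_integrable (μ := volume)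
      (f := pd b w) (g := pd k v) (v := EuclideanSpace.single a 1) ?_ ?_ ?_ ?_ ?_
    · exact integrable_mul_of_bound ((hw.smooth.pd b).pd a).continuous (hv.pd k).continuous
        (hw.int2 a b) (h1 k)
    · exact integrable_mul_of_bound (hw.smooth.pd b).continuous ((hv.pd k).pd a).continuous
        (hw.int1 b) (h2 k a)
    · exact integrable_mul_of_bound (hw.smooth.pd b).continuous (hv.pd k).continuous
        (hw.int1 b) (h1 k)
    · exact fun x _ => (hw.smooth.pd b).diff x
    · exact fun x _ => (hv.pd k).diff x
  have e1 := key a b k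
  have e2 := key k b a
  have e3 := key b k a
  rw [pd_comm hv k a, pd_comm hw.smooth k b] at e2
  linarith

/-- Green's identity for the Lamé operator tested against a derivative of the kernel. -/
lemma lame_identity {W : Fin n → Euc n → ℝ} (hW : ∀ i, Good (W i)) (j k : Fin n) :
    ∫ z, ∑ i, lame W i z * pd k (Vk j i) z =
      ((1 + kap n) * ((n : ℝ) * (n - 2) * (n + 2))) *
        ∫ z, pd k (W j) z * Sp (-((n : ℝ) + 4) / 2) z := by
  obtain ⟨C, hC, hV⟩ := Vk_bound (n := n)
  have hVs : ∀ i, Smooth (Vk j i) := fun i => (Vk_symb j i).smooth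
  have hi2 : ∀ a b c i : Fin n, Integrable (fun z => pd a (pd b (W c)) z * pd k (Vk j i) z) :=
    fun a b c i => integrable_mul_of_bound (((hW c).smooth.pd b).pd a).continuous
      ((hVs i).pd k).continuous ((hW c).int2 a b) (fun z => (hV j i k z).1)
  have hi1 : ∀ a b c i : Fin n, Integrable (fun z => pd k (W c) z * pd a (pd b (Vk j i)) z) :=
    fun a b c i => integrable_mul_of_bound ((hW c).smooth.pd k).continuous
      (((hVs i).pd b).pd a).continuous ((hW c).int1 k) (fun z => (hV j i b z).2 a)
  have base : ∀ a b c i : Fin n, ∫ z, pd a (pd b (W c)) z * pd k (Vk j i) z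
      = -∫ z, pd k (W c) z * pd b (pd a (Vk j i)) z := fun a b c i =>
    ibp_three (hW c) (hVs i) (fun k z => (hV j i k z).1) (fun k l z => (hV j i k z).2 l) a b k
  have hL : ∫ z, ∑ i, lame W i z * pd k (Vk j i) z =
      ∑ i, ∑ a, ((∫ z, pd a (pd a (W i)) z * pd k (Vk j i) z)
        + kap n * ∫ z, pd i (pd a (W a)) z * pd k (Vk j i) z) := by
    simp only [lame, Finset.sum_mul, add_mul, mul_assoc]
    rw [integral_finsetSum]
    · refine Finset.sum_congr rfl fun i _ => ?_
      rw [integral_finsetSum]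
      · refine Finset.sum_congr rfl fun a _ => ?_
        rw [integral_add (hi2 a a i i) ((hi2 i a a i).const_mul _), integral_const_mul]
      · exact fun a _ => (hi2 a a i i).add ((hi2 i a a i).const_mul _)
    · exact fun i _ => integrable_finsetSum _ fun a _ =>
        (hi2 a a i i).add ((hi2 i a a i).const_mul _)
  have hR : ∫ z, ∑ i, pd k (W i) z * lame (Vk j) i z =
      ∑ i, ∑ a, ((∫ z, pd k (W i) z * pd a (pd a (Vk j i)) z)
        + kap n * ∫ z, pd k (W i) z * pd i (pd a (Vk j a)) z) := by
    simp only [lame, Finset.mul_sum, mul_add, mul_left_comm _ (kap n)]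
    rw [integral_finsetSum]
    · refine Finset.sum_congr rfl fun i _ => ?_
      rw [integral_finsetSum]
      · refine Finset.sum_congr rfl fun a _ => ?_
        rw [integral_add (hi1 a a i i) ((hi1 i a i a).const_mul _), integral_const_mul]
      · exact fun a _ => (hi1 a a i i).add ((hi1 i a i a).const_mul _)
    · exact fun i _ => integrable_finsetSum _ fun a _ =>
        (hi1 a a i i).add ((hi1 i a i a).const_mul _)
  have hLR : ∫ z, ∑ i, lame W i z * pd k (Vk j i) z
      = -∫ z, ∑ i, pd k (W i) z * lame (Vk j) i z := by
    rw [hL, hR]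
    simp only [base, Finset.sum_add_distrib]
    rw [Finset.sum_comm (f := fun i a => kap n * -∫ z, pd k (W a) z * pd a (pd i (Vk j i)) z)]
    simp only [mul_neg, Finset.sum_neg_distrib]
    ring
  rw [hLR, ← integral_neg, ← integral_const_mul]
  congr 1
  funext z
  simp only [lame_Vk, lap_Pk]
  rw [Finset.sum_eq_single j]
  · simp; ring
  · intro b _ hb; simp [hb]
  · simp

end ibp

/-! ### Rescaling and the pointwise gradient bound -/

section rescale
variable {n : ℕ}

lemma rpow_jap_le {A : ℝ} (hA : 0 < A) (hn : 1 ≤ n) {y z : Euc n} (h : jap y ≤ A * jap z) :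
    jap z ^ (1 - (n : ℝ)) ≤ A ^ ((n : ℝ) - 1) * jap y ^ (1 - (n : ℝ)) := by
  have hn' : (1 : ℝ) ≤ n := by exact_mod_cast hn
  have h1 : jap y / A ≤ jap z := by rw [div_le_iff₀ hA]; linarith
  calc jap z ^ (1 - (n : ℝ)) ≤ (jap y / A) ^ (1 - (n : ℝ)) :=
        Real.rpow_le_rpow_of_nonpos (div_pos (jap_pos y) hA) h1 (by linarith)
    _ = _ := by
        rw [Real.div_rpow (jap_pos y).le hA.le, div_eq_mul_inv, ← Real.rpow_neg hA.le, mul_comm]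
        congr 2; ring

lemma jap_smul_le {e : ℝ} (he : 0 ≤ e) (z : Euc n) : jap (e • z) ≤ (1 + e) * jap z := by
  have h1 := jap_sq (e • z)
  rw [norm_smul, Real.norm_eq_abs, abs_of_nonneg he] at h1
  have h2 := jap_sq z
  have h3 := one_le_jap z
  have : jap (e • z) ^ 2 ≤ ((1 + e) * jap z) ^ 2 := by
    rw [h1, mul_pow, mul_pow, h2]; nlinarith [sq_nonneg ‖z‖, sq_nonneg e]
  have hj := jap_pos z
  exact (sq_le_sq₀ (jap_pos _).le (by positivity)).1 this

lemma integrable_affine {h : Euc n → ℝ} (hn : 1 ≤ n) (hc : Continuous h)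
    (hi : Integrable (fun z => h z * jap z ^ (1 - (n : ℝ)))) (x : Euc n) {e : ℝ} (he : 0 < e) :
    Integrable (fun z => h (x + e • z) * jap z ^ (1 - (n : ℝ))) := by
  have h1 : Integrable (fun z => h (x + e • z) * jap (x + e • z) ^ (1 - (n : ℝ))) :=
    (hi.comp_add_left x).comp_smul he.ne'
  set A := ‖x‖ + (1 + e) with hA
  have hA0 : 0 < A := by positivity
  refine (h1.norm.const_mul (A ^ ((n : ℝ) - 1))).mono' ?_ (Eventually.of_forall fun z => ?_)
  · exact ((hc.comp (by fun_prop)).mul (continuous_jap_rpow _)).aestronglyMeasurable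
  have hj : jap (x + e • z) ≤ A * jap z := by
    have := jap_le_add (x + e • z) (e • z)
    have h2 := jap_smul_le he.le z
    have h3 := one_le_jap z
    simp only [add_sub_cancel_right] at this
    nlinarith [norm_nonneg x]
  have hj2 := rpow_jap_le hA0 hn hj
  simp only [norm_mul, Real.norm_eq_abs, abs_of_nonneg (Real.rpow_nonneg (jap_pos _).le _)]
  calc _ ≤ |h (x + e • z)| * (A ^ ((n : ℝ) - 1) * jap (x + e • z) ^ (1 - (n : ℝ))) := by gcongr
    _ = _ := by ring

lemma Good.affine {w : Euc n → ℝ} (hn : 1 ≤ n) (hw : Good w) (x : Euc n) {e : ℝ} (he : 0 < e) :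
    Good (fun z => w (x + e • z)) := by
  refine ⟨hw.smooth.affine x e, fun a => ?_, fun a b => ?_⟩
  · rw [pd_affine hw.smooth]
    simpa only [mul_assoc] using
      (integrable_affine hn (hw.smooth.pd a).continuous (hw.int1 a) x he).const_mul e
  · rw [pd_affine hw.smooth, pd_const_mul ((hw.smooth.pd b).affine x e), pd_affine (hw.smooth.pd b)]
    simpa only [mul_assoc] using
      ((integrable_affine hn ((hw.smooth.pd b).pd a).continuous (hw.int2 a b) x he).const_mul
        e).const_mul e

lemma lame_affine {W : Fin n → Euc n → ℝ} (hW : ∀ i, Smooth (W i)) (x : Euc n) (e : ℝ)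
    (i : Fin n) (z : Euc n) :
    lame (fun i z => W i (x + e • z)) i z = e ^ 2 * lame W i (x + e • z) := by
  have h : ∀ a b c : Fin n, pd a (pd b (fun z => W c (x + e • z)))
      = fun z => e * (e * pd a (pd b (W c)) (x + e • z)) := by
    intro a b c
    rw [pd_affine (hW c), pd_const_mul (((hW c).pd b).affine x e), pd_affine ((hW c).pd b)]
  simp only [lame, h, Finset.mul_sum]
  refine Finset.sum_congr rfl fun a _ => ?_
  ring

lemma lintegral_comp_smul {G : Euc n → ℝ≥0∞} (hG : Measurable G) {e : ℝ} (he : 0 < e) :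
    ∫⁻ z, G (e • z) = ENNReal.ofReal ((e ^ n)⁻¹) * ∫⁻ z, G z := by
  rw [← lintegral_map (μ := volume) (f := G) (g := fun z : Euc n => e • z) hG (by fun_prop),
    Measure.map_addHaar_smul volume he.ne', lintegral_smul_measure]
  simp only [finrank_euclideanSpace, Fintype.card_fin, smul_eq_mul]
  rw [abs_of_pos (by positivity)]

lemma integrable_bump : Integrable (Sp (-((n : ℝ) + 4) / 2) : Euc n → ℝ) :=
  integrable_rpow_neg_one_add_norm_sq (μ := volume) (r := (n : ℝ) + 4) (by simp)

lemma integral_bump_pos : 0 < ∫ z : Euc n, Sp (-((n : ℝ) + 4) / 2) z := by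
  rw [integral_pos_iff_support_of_nonneg (fun z => (Sp_pos _ z).le) integrable_bump]
  have : Function.support (Sp (-((n : ℝ) + 4) / 2) : Euc n → ℝ) = Set.univ := by
    ext z; simp [(Sp_pos _ z).ne']
  rw [this]
  exact Measure.measure_univ_pos.2 (NeZero.ne _)

/-- On the region `‖e z‖ ≥ 1` the bump beats the growth allowed by the integrability of
`h ⟨·⟩^{1-n}`. -/
lemma tail_bound (hn : 1 ≤ n) (x z : Euc n) {e : ℝ} (he : 0 < e) (hz : 1 ≤ ‖e • z‖) :
    Sp (-((n : ℝ) + 4) / 2) z ≤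
      (e ^ n * e ^ 4 * (‖x‖ + 2) ^ ((n : ℝ) - 1)) * jap (x + e • z) ^ (1 - (n : ℝ)) := by
  have hz' := hz
  rw [norm_smul, Real.norm_eq_abs, abs_of_pos he] at hz'
  have hjz := norm_le_jap z
  have h1 : jap (e • z) ≤ 2 * ‖e • z‖ := by
    have := jap_sq (e • z)
    refine (sq_le_sq₀ (jap_pos _).le (by positivity)).1 ?_
    nlinarith
  have h2 : jap (x + e • z) ≤ ((‖x‖ + 2) * e) * jap z := by
    have := jap_le_add (x + e • z) (e • z)
    simp only [add_sub_cancel_right] at this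
    rw [norm_smul, Real.norm_eq_abs, abs_of_pos he] at h1
    have h3 : e * ‖z‖ ≤ e * jap z := by gcongr
    nlinarith [norm_nonneg x]
  have h3 := rpow_jap_le (by positivity) hn h2
  have h4 : (jap z)⁻¹ ≤ e := by
    rw [inv_le_comm₀ (jap_pos z) he, inv_le_iff_one_le_mul₀ he]
    nlinarith
  have h5 : Sp (-((n : ℝ) + 4) / 2) z = jap z ^ (1 - (n : ℝ)) * (jap z)⁻¹ ^ 5 := by
    rw [Sp_eq_jap, inv_pow, ← Real.rpow_natCast (jap z) 5, ← Real.rpow_neg (jap_pos z).le,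
      ← Real.rpow_add (jap_pos z)]
    congr 1; push_cast; ring
  have h6 : ((‖x‖ + 2) * e) ^ ((n : ℝ) - 1) * e ^ 5
      = e ^ n * e ^ 4 * (‖x‖ + 2) ^ ((n : ℝ) - 1) := by
    rw [Real.mul_rpow (by positivity) he.le, Real.rpow_sub_one he.ne', Real.rpow_natCast]
    field_simp
  have hpos : 0 ≤ jap (x + e • z) ^ (1 - (n : ℝ)) := Real.rpow_nonneg (jap_pos _).le _
  have hpos' := jap_pos z
  rw [h5]
  calc _ ≤ (((‖x‖ + 2) * e) ^ ((n : ℝ) - 1) * jap (x + e • z) ^ (1 - (n : ℝ))) * e ^ 5 := by gcongr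
    _ = _ := by rw [← h6]; ring

/-- The bump is an approximate identity on continuous functions integrable against `⟨z⟩^{1-n}`. -/
lemma tendsto_bump (hn : 1 ≤ n) {h : Euc n → ℝ} (hc : Continuous h)
    (hi : Integrable (fun z => h z * jap z ^ (1 - (n : ℝ)))) (x : Euc n) :
    Tendsto (fun e : ℝ => ∫ z, h (x + e • z) * Sp (-((n : ℝ) + 4) / 2) z) (𝓝[>] 0)
      (𝓝 (h x * ∫ z : Euc n, Sp (-((n : ℝ) + 4) / 2) z)) := by
  set S : Euc n → ℝ := Sp (-((n : ℝ) + 4) / 2) with hS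
  have hS0 : ∀ z, 0 < S z := Sp_pos _
  have hSc : Continuous S := (Sp_smooth _).continuous
  have hSi : Integrable S := integrable_bump
  obtain ⟨M, hM⟩ := (isCompact_closedBall x 1).exists_bound_of_continuousOn hc.continuousOn
  let B : ℝ → Euc n → ℝ := fun e => {z : Euc n | ‖e • z‖ < 1}.indicator (fun z => h (x + e • z) * S z)
  have hmeas : ∀ e : ℝ, MeasurableSet {z : Euc n | ‖e • z‖ < 1} := fun e =>
    (isOpen_lt (by fun_prop) continuous_const).measurableSet
  have hcont : ∀ e : ℝ, Continuous (fun z => h (x + e • z) * S z) := fun e =>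
    (hc.comp (by fun_prop)).mul hSc
  have hM0 : 0 ≤ M := (norm_nonneg _).trans (hM x (by simp))
  have hBb : ∀ e z, ‖B e z‖ ≤ M * S z := by
    intro e z
    by_cases hz : ‖e • z‖ < 1
    · simp only [B, Set.indicator, Set.mem_ofPred_eq, hz, if_true, norm_mul]
      rw [Real.norm_eq_abs (S z), abs_of_pos (hS0 z)]
      have := hM (x + e • z) (by simpa [Metric.mem_closedBall, dist_eq_norm] using hz.le)
      gcongr
      exact (hS0 z).le
    · simp only [B, Set.indicator, Set.mem_ofPred_eq, hz, if_false, norm_zero]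
      exact mul_nonneg hM0 (hS0 z).le
  have hBm : ∀ e, AEStronglyMeasurable (B e) volume := fun e =>
    (hcont e).aestronglyMeasurable.indicator (hmeas e)
  have hBi : ∀ e, Integrable (B e) := fun e =>
    (hSi.const_mul M).mono' (hBm e) (Eventually.of_forall (hBb e))
  have lim1 : Tendsto (fun e : ℝ => ∫ z, B e z) (𝓝[>] 0) (𝓝 (∫ z, h x * S z)) := by
    refine tendsto_integral_filter_of_dominated_convergence (fun z => M * S z)
      (Eventually.of_forall hBm) (Eventually.of_forall fun e => Eventually.of_forall (hBb e))
      (hSi.const_mul M) (Eventually.of_forall fun z => ?_)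
    have c1 : Tendsto (fun e : ℝ => h (x + e • z) * S z) (𝓝[>] 0) (𝓝 (h x * S z)) := by
      have : Continuous (fun e : ℝ => h (x + e • z) * S z) :=
        (hc.comp (by fun_prop)).mul continuous_const
      simpa using (this.tendsto 0).mono_left nhdsWithin_le_nhds
    refine c1.congr' ?_
    have c2 : ∀ᶠ e : ℝ in 𝓝[>] 0, ‖e • z‖ < 1 := by
      have : Continuous (fun e : ℝ => ‖e • z‖) := by fun_prop
      exact ((this.tendsto 0).mono_left nhdsWithin_le_nhds).eventually
        (gt_mem_nhds (by simp))
    filter_upwards [c2] with e he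
    simp [B, he]
  rw [integral_const_mul] at lim1
  set L := ∫ z, ‖h z * jap z ^ (1 - (n : ℝ))‖ with hL
  have hdiff : ∀ᶠ e : ℝ in 𝓝[>] 0, ‖(∫ z, h (x + e • z) * S z) - ∫ z, B e z‖
      ≤ e ^ 4 * ((‖x‖ + 2) ^ ((n : ℝ) - 1) * L) := by
    filter_upwards [self_mem_nhdsWithin] with e (he : 0 < e)
    have hti : Integrable (fun z => h (x + e • z) * S z) :=
      integrable_mul_of_bound (f := fun z => h (x + e • z)) (g := S) (hc.comp (by fun_prop)) hSc
        (integrable_affine hn hc hi x he) (C := 1) (fun z => by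
          rw [abs_of_pos (hS0 z), one_mul, hS, Sp_eq_jap]
          exact Real.rpow_le_rpow_of_exponent_le (one_le_jap z) (by linarith))
    rw [← integral_sub hti (hBi e)]
    have hint : Integrable (fun z => ‖h (x + e • z) * jap (x + e • z) ^ (1 - (n : ℝ))‖) :=
      ((hi.comp_add_left x).comp_smul he.ne').norm
    have hcv : ∫ z, ‖h (x + e • z) * jap (x + e • z) ^ (1 - (n : ℝ))‖ = (e ^ n)⁻¹ * L := by
      rw [Measure.integral_comp_smul volume
        (fun y => ‖h (x + y) * jap (x + y) ^ (1 - (n : ℝ))‖) e,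
        integral_add_left_eq_self (fun y => ‖h y * jap y ^ (1 - (n : ℝ))‖) x]
      simp only [finrank_euclideanSpace, Fintype.card_fin, smul_eq_mul]
      rw [abs_of_pos (by positivity)]
    refine (norm_integral_le_of_norm_le (hint.const_mul
      (e ^ n * e ^ 4 * (‖x‖ + 2) ^ ((n : ℝ) - 1))) (Eventually.of_forall fun z => ?_)).trans ?_
    · by_cases hz : ‖e • z‖ < 1
      · simp only [B, Set.indicator, Set.mem_ofPred_eq, hz, if_true, sub_self, norm_zero]
        positivity
      · simp only [B, Set.indicator, Set.mem_ofPred_eq, hz, if_false, sub_zero, norm_mul]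
        have := tail_bound hn x z he (not_lt.1 hz)
        rw [Real.norm_eq_abs (S z), abs_of_pos (hS0 z),
          Real.norm_eq_abs (_ ^ _), abs_of_nonneg (Real.rpow_nonneg (jap_pos _).le _)]
        calc _ ≤ ‖h (x + e • z)‖ * ((e ^ n * e ^ 4 * (‖x‖ + 2) ^ ((n : ℝ) - 1))
              * jap (x + e • z) ^ (1 - (n : ℝ))) := by gcongr
          _ = _ := by ring
    · rw [integral_const_mul, hcv]
      apply le_of_eq
      field_simp
  have lim2 : Tendsto (fun e : ℝ => (∫ z, h (x + e • z) * S z) - ∫ z, B e z) (𝓝[>] 0) (𝓝 0) := by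
    refine squeeze_zero_norm' hdiff ?_
    have : Continuous (fun e : ℝ => e ^ 4 * ((‖x‖ + 2) ^ ((n : ℝ) - 1) * L)) := by fun_prop
    simpa using (this.tendsto 0).mono_left (nhdsWithin_le_nhds (s := Set.Ioi 0))
  simpa using lim2.add lim1

/-- The first derivatives of `W` are dominated by the Riesz potential `‖·‖^{1-n} * |LW|` of its
image under the Lamé operator, with a constant depending only on the dimension. -/
lemma gradient_le_riesz (hn : 3 ≤ n) : ∃ C, 0 < C ∧ ∀ (W : Fin n → Euc n → ℝ),
    (∀ i, Good (W i)) → ∀ (x : Euc n) (I : ℝ), 0 ≤ I →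
    ∫⁻ y, ENNReal.ofReal (‖y‖ ^ (1 - (n : ℝ)) * ∑ i, |lame W i (x + y)|) ≤ ENNReal.ofReal I →
    ∀ j k, |pd k (W j) x| ≤ C * I := by
  have hn1 : 1 ≤ n := by omega
  have hn3 : (3 : ℝ) ≤ n := by exact_mod_cast hn
  obtain ⟨Cv, hCv, hV⟩ := Vk_bound (n := n)
  set c : ℝ := (1 + kap n) * ((n : ℝ) * (n - 2) * (n + 2)) with hcdef
  have hkap : 0 ≤ kap n := by
    unfold kap
    rw [sub_nonneg, div_le_one (by linarith)]; linarith
  have hc : 0 < c := by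
    have : (0 : ℝ) < n - 2 := by linarith
    positivity
  set m := ∫ z : Euc n, Sp (-((n : ℝ) + 4) / 2) z with hm
  have hm0 : 0 < m := integral_bump_pos
  refine ⟨Cv / (c * m), by positivity, fun W hW x I hI0 hI j k => ?_⟩
  have hlc : ∀ i, Continuous (lame W i) := by
    intro i
    unfold lame
    refine continuous_finsetSum _ fun a _ => ?_
    exact (((hW i).smooth.pd a).pd a).continuous.add
      (continuous_const.mul (((hW a).smooth.pd a).pd i).continuous)
  have hGm : Measurable
      (fun y => ENNReal.ofReal (‖y‖ ^ (1 - (n : ℝ)) * ∑ i, |lame W i (x + y)|)) := by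
    have : Measurable (fun y => ∑ i, |lame W i (x + y)|) :=
      (continuous_finsetSum _ fun i _ => ((hlc i).comp (by fun_prop)).abs).measurable
    exact ((measurable_norm.pow_const _).mul this).ennreal_ofReal
  have bound : ∀ e : ℝ, 0 < e →
      |∫ z, pd k (W j) (x + e • z) * Sp (-((n : ℝ) + 4) / 2) z| ≤ Cv / c * I := by
    intro e he
    have hid := lame_identity (fun i => (hW i).affine hn1 x he) j k
    simp only [lame_affine (fun i => (hW i).smooth) x e, pd_affine (hW j).smooth, mul_assoc,
      integral_const_mul] at hid
    rw [← mul_assoc, ← mul_assoc, ← mul_assoc] at hid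
    set X := ∫ z, pd k (W j) (x + e • z) * Sp (-((n : ℝ) + 4) / 2) z with hX
    set Y := ∫ z, ∑ i, e ^ 2 * (lame W i (x + e • z) * pd k (Vk j i) z) with hY
    have hle : ENNReal.ofReal |Y| ≤ ENNReal.ofReal (e * Cv * I) := by
      have h0 : ENNReal.ofReal |Y| = ‖Y‖ₑ := by rw [← Real.norm_eq_abs, ofReal_norm]
      rw [h0]
      refine (enorm_integral_le_lintegral_enorm _).trans ?_
      have hae : ∀ᵐ z : Euc n, z ≠ 0 := by
        have : Nontrivial (Euc n) := by
          have : Nonempty (Fin n) := ⟨j⟩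
          infer_instance
        exact compl_mem_ae_iff.mpr (measure_singleton (μ := (volume : Measure (Euc n))) 0)
      calc _ ≤ ∫⁻ z, ENNReal.ofReal (e ^ 2 * Cv * e ^ ((n : ℝ) - 1)) *
            ENNReal.ofReal (‖e • z‖ ^ (1 - (n : ℝ)) * ∑ i, |lame W i (x + e • z)|) := by
            refine lintegral_mono_ae ?_
            filter_upwards [hae] with z hz
            have hz0 : 0 < ‖z‖ := norm_pos_iff.2 hz
            rw [← ofReal_norm, ← ENNReal.ofReal_mul (by positivity)]
            refine ENNReal.ofReal_le_ofReal ?_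
            rw [norm_smul, Real.norm_eq_abs e, abs_of_pos he, Real.mul_rpow he.le hz0.le]
            have hee : e ^ ((n : ℝ) - 1) * e ^ (1 - (n : ℝ)) = 1 := by
              rw [← Real.rpow_add he]; simp
            have hjn : jap z ^ (1 - (n : ℝ)) ≤ ‖z‖ ^ (1 - (n : ℝ)) :=
              Real.rpow_le_rpow_of_nonpos hz0 (norm_le_jap z) (by linarith)
            calc ‖∑ i, e ^ 2 * (lame W i (x + e • z) * pd k (Vk j i) z)‖
                ≤ ∑ i, ‖e ^ 2 * (lame W i (x + e • z) * pd k (Vk j i) z)‖ := norm_sum_le _ _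
              _ ≤ ∑ i, e ^ 2 * (|lame W i (x + e • z)| * (Cv * ‖z‖ ^ (1 - (n : ℝ)))) := by
                  refine Finset.sum_le_sum fun i _ => ?_
                  rw [norm_mul, norm_mul, Real.norm_eq_abs, Real.norm_eq_abs, Real.norm_eq_abs,
                    abs_of_nonneg (sq_nonneg e)]
                  have := (hV j i k z).1
                  gcongr
                  exact this.trans (by gcongr)
              _ = e ^ 2 * Cv * ‖z‖ ^ (1 - (n : ℝ)) * ∑ i, |lame W i (x + e • z)| := by
                  rw [Finset.mul_sum]
                  exact Finset.sum_congr rfl fun i _ => by ring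
              _ = e ^ 2 * Cv * (e ^ ((n : ℝ) - 1) * e ^ (1 - (n : ℝ))) * ‖z‖ ^ (1 - (n : ℝ))
                  * ∑ i, |lame W i (x + e • z)| := by rw [hee]; ring
              _ = _ := by ring
        _ = ENNReal.ofReal (e ^ 2 * Cv * e ^ ((n : ℝ) - 1)) * (ENNReal.ofReal ((e ^ n)⁻¹) *
            ∫⁻ y, ENNReal.ofReal (‖y‖ ^ (1 - (n : ℝ)) * ∑ i, |lame W i (x + y)|)) := by
            rw [lintegral_const_mul' _ _ ENNReal.ofReal_ne_top, ← lintegral_comp_smul hGm he]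
        _ ≤ ENNReal.ofReal (e ^ 2 * Cv * e ^ ((n : ℝ) - 1)) * (ENNReal.ofReal ((e ^ n)⁻¹) *
            ENNReal.ofReal I) := by gcongr
        _ = ENNReal.ofReal (e * Cv * I) := by
            rw [← ENNReal.ofReal_mul (by positivity), ← ENNReal.ofReal_mul (by positivity)]
            congr 1
            rw [Real.rpow_sub_one he.ne', Real.rpow_natCast]
            field_simp
    rw [ENNReal.ofReal_le_ofReal_iff (by positivity)] at hle
    have hYX : |Y| = c * e * |X| := by
      have : Y = c * e * X := by rw [hid, hcdef]; ring
      rw [this, abs_mul, abs_of_pos (mul_pos hc he)]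
    rw [hYX] at hle
    rw [div_mul_eq_mul_div, le_div_iff₀ hc]
    have : e * (|X| * c) ≤ e * (Cv * I) := by linarith
    exact le_of_mul_le_mul_left this he
  have lim := (tendsto_bump hn1 ((hW j).smooth.pd k).continuous ((hW j).int1 k) x).abs
  have := le_of_tendsto lim (by
    filter_upwards [self_mem_nhdsWithin] with e he using bound e he)
  rw [abs_mul, abs_of_pos hm0] at this
  rw [div_mul_eq_mul_div, le_div_iff₀ (by positivity)]
  rw [div_mul_eq_mul_div, le_div_iff₀ hc] at this
  linarith

end rescale

/-! ### A weighted estimate for the Riesz potential -/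

section riesz
variable {n : ℕ}

lemma lintegral_radial_scale {k : ℝ → ℝ} (hk : Measurable k) (A : ℝ)
    {r : ℝ} (hr : 0 < r) :
    ∫⁻ y : Euc n, ENNReal.ofReal (k (‖y‖ / r) * ‖y‖ ^ (-A)) =
      ENNReal.ofReal (r ^ ((n : ℝ) - A)) *
        ∫⁻ y : Euc n, ENNReal.ofReal (k ‖y‖ * ‖y‖ ^ (-A)) := by
  have hm : Measurable (fun y : Euc n => ENNReal.ofReal (k (‖y‖ / r) * ‖y‖ ^ (-A))) :=
    ((hk.comp (measurable_norm.div_const r)).mul (measurable_norm.pow_const _)).ennreal_ofReal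
  have h := lintegral_comp_smul hm hr
  have h2 : ∀ z : Euc n, ENNReal.ofReal (k (‖r • z‖ / r) * ‖r • z‖ ^ (-A)) =
      ENNReal.ofReal (r ^ (-A)) * ENNReal.ofReal (k ‖z‖ * ‖z‖ ^ (-A)) := by
    intro z
    rw [← ENNReal.ofReal_mul (by positivity), norm_smul, Real.norm_eq_abs, abs_of_pos hr,
      mul_div_cancel_left₀ _ hr.ne', Real.mul_rpow hr.le (norm_nonneg z)]
    congr 1; ring
  simp only [h2] at h
  rw [lintegral_const_mul' _ _ ENNReal.ofReal_ne_top] at h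
  have h3 : r ^ ((n : ℝ) - A) = r ^ n * r ^ (-A) := by
    rw [sub_eq_add_neg, Real.rpow_add hr, Real.rpow_natCast]
  rw [h3, ENNReal.ofReal_mul (by positivity), mul_assoc, h, ← mul_assoc,
    ← ENNReal.ofReal_mul (by positivity), mul_inv_cancel₀ (by positivity), ENNReal.ofReal_one,
    one_mul]

lemma exists_ball_bound (hn : 1 ≤ n) {A : ℝ} (hA : A < n) : ∃ C : ℝ, 0 ≤ C ∧ ∀ r : ℝ, 0 < r →
    ∫⁻ y : Euc n, ENNReal.ofReal ((Set.Iio (1 : ℝ)).indicator 1 (‖y‖ / r) * ‖y‖ ^ (-A)) ≤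
      ENNReal.ofReal (C * r ^ ((n : ℝ) - A)) := by
  have hk : Measurable ((Set.Iio (1 : ℝ)).indicator (1 : ℝ → ℝ)) :=
    measurable_one.indicator measurableSet_Iio
  have fin : ∫⁻ y : Euc n, ENNReal.ofReal ((Set.Iio (1 : ℝ)).indicator 1 ‖y‖ * ‖y‖ ^ (-A)) ≠ ⊤ := by
    have : IntegrableOn (fun y : Euc n => ‖y‖ ^ (-A)) (Metric.ball 0 1) := by
      refine integrableOn_ball_of_norm_le_rpow (C := 1) (α := A) (by simpa using hn)
        (by simpa using hA) (Eventually.of_forall fun y => ?_)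
        (measurable_norm.pow_const _).aestronglyMeasurable
      rw [one_mul, Real.norm_eq_abs, abs_of_nonneg (by positivity)]
    have h2 := (this.integrable_indicator Metric.isOpen_ball.measurableSet).lintegral_lt_top.ne
    convert h2 using 5 with y
    by_cases hy : ‖y‖ < 1 <;> simp [Set.indicator, hy]
  refine ⟨(∫⁻ y : Euc n, ENNReal.ofReal
    ((Set.Iio (1 : ℝ)).indicator 1 ‖y‖ * ‖y‖ ^ (-A))).toReal, ENNReal.toReal_nonneg,
    fun r hr => ?_⟩
  rw [lintegral_radial_scale hk A hr, mul_comm, ENNReal.ofReal_mul ENNReal.toReal_nonneg,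
    ENNReal.ofReal_toReal fin]

lemma exists_tail_bound {D : ℝ} (hD : (n : ℝ) < D) : ∃ C : ℝ, 0 ≤ C ∧ ∀ r : ℝ, 0 < r →
    ∫⁻ y : Euc n, ENNReal.ofReal ((Set.Ici (1 : ℝ)).indicator 1 (‖y‖ / r) * ‖y‖ ^ (-D)) ≤
      ENNReal.ofReal (C * r ^ ((n : ℝ) - D)) := by
  have hk : Measurable ((Set.Ici (1 : ℝ)).indicator (1 : ℝ → ℝ)) :=
    measurable_one.indicator measurableSet_Ici
  have hD0 : 0 ≤ D := (Nat.cast_nonneg n).trans hD.le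
  have fin : ∫⁻ y : Euc n, ENNReal.ofReal ((Set.Ici (1 : ℝ)).indicator 1 ‖y‖ * ‖y‖ ^ (-D)) ≠ ⊤ := by
    have hi : Integrable (fun y : Euc n => (1 + ‖y‖) ^ (-D)) :=
      integrable_one_add_norm (by simpa using hD)
    refine ((hi.const_mul (2 ^ D)).lintegral_lt_top.trans_le' ?_).ne
    refine lintegral_mono fun y => ENNReal.ofReal_le_ofReal ?_
    by_cases hy : 1 ≤ ‖y‖
    · simp only [Set.indicator, Set.mem_Ici, hy, if_true, Pi.one_apply, one_mul]
      calc ‖y‖ ^ (-D) ≤ ((1 + ‖y‖) / 2) ^ (-D) :=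
            Real.rpow_le_rpow_of_nonpos (by positivity) (by linarith) (by linarith)
        _ = _ := by
            rw [Real.div_rpow (by positivity) (by norm_num), Real.rpow_neg (by norm_num : (0:ℝ) ≤ 2)]
            field_simp
    · simp only [Set.indicator, Set.mem_Ici, hy, if_false, zero_mul]
      positivity
  refine ⟨(∫⁻ y : Euc n, ENNReal.ofReal
    ((Set.Ici (1 : ℝ)).indicator 1 ‖y‖ * ‖y‖ ^ (-D))).toReal, ENNReal.toReal_nonneg,
    fun r hr => ?_⟩
  rw [lintegral_radial_scale hk D hr, mul_comm, ENNReal.ofReal_mul ENNReal.toReal_nonneg,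
    ENNReal.ofReal_toReal fin]

/-- The convolution `‖·‖^{-A} * ⟨·⟩^{-B}` decays like `⟨x⟩^{n-A-B}` when `A, B < n < A + B`. The
integral is split according to whether `y` is closer to `0` than `⟨x⟩/2`, and, if not, whether
`‖x + y‖` is smaller than `⟨x⟩`. -/
lemma riesz_weight (hn : 1 ≤ n) {A B : ℝ} (hA0 : 0 < A) (hA : A < n) (hB0 : 0 < B) (hB : B < n)
    (hAB : (n : ℝ) < A + B) : ∃ C : ℝ, 0 ≤ C ∧ ∀ x : Euc n,
    ∫⁻ y : Euc n, ENNReal.ofReal (‖y‖ ^ (-A) * jap (x + y) ^ (-B)) ≤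
      ENNReal.ofReal (C * jap x ^ ((n : ℝ) - A - B)) := by
  obtain ⟨C1, hC1, H1⟩ := exists_ball_bound hn hA
  obtain ⟨C2, hC2, H2⟩ := exists_ball_bound hn hB
  obtain ⟨C3, hC3, H3⟩ := exists_tail_bound hAB
  refine ⟨2 ^ B * C1 + 2 ^ A * C2 + 3 ^ A * C3, by positivity, fun x => ?_⟩
  set r := jap x with hr
  have hr0 : 0 < r := jap_pos x
  have hxr : ‖x‖ ≤ r := norm_le_jap x
  let k₁ : ℝ → ℝ := (Set.Iio (1 : ℝ)).indicator 1
  let k₂ : ℝ → ℝ := (Set.Ici (1 : ℝ)).indicator 1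
  have k₁0 : ∀ t, 0 ≤ k₁ t := fun t => Set.indicator_nonneg (fun _ _ => zero_le_one) t
  have k₂0 : ∀ t, 0 ≤ k₂ t := fun t => Set.indicator_nonneg (fun _ _ => zero_le_one) t
  have mk₁ : Measurable k₁ := measurable_one.indicator measurableSet_Iio
  have mk₂ : Measurable k₂ := measurable_one.indicator measurableSet_Ici
  let g₁ : Euc n → ℝ≥0∞ := fun y => ENNReal.ofReal (k₁ (‖y‖ / r) * ‖y‖ ^ (-A))
  let g₂ : Euc n → ℝ≥0∞ := fun y => ENNReal.ofReal (k₁ (‖y‖ / r) * ‖y‖ ^ (-B))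
  let g₃ : Euc n → ℝ≥0∞ := fun y => ENNReal.ofReal (k₂ (‖y‖ / r) * ‖y‖ ^ (-(A + B)))
  have mg₁ : Measurable g₁ :=
    ((mk₁.comp (measurable_norm.div_const r)).mul (measurable_norm.pow_const _)).ennreal_ofReal
  have mg₂ : Measurable g₂ :=
    ((mk₁.comp (measurable_norm.div_const r)).mul (measurable_norm.pow_const _)).ennreal_ofReal
  have hae : ∀ᵐ y : Euc n, x + y ≠ 0 := by
    have : Nontrivial (Euc n) := by
      have : Nonempty (Fin n) := ⟨⟨0, hn⟩⟩
      infer_instance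
    have h := compl_mem_ae_iff.mpr (measure_singleton (μ := (volume : Measure (Euc n))) (-x))
    filter_upwards [h] with y hy h0
    exact hy (by simpa [eq_comm] using (neg_eq_of_add_eq_zero_right h0).symm)
  have hpt : ∀ᵐ y : Euc n, ENNReal.ofReal (‖y‖ ^ (-A) * jap (x + y) ^ (-B)) ≤
      ENNReal.ofReal ((r / 2) ^ (-B)) * g₁ y + ENNReal.ofReal ((r / 2) ^ (-A)) * g₂ (x + y)
        + ENNReal.ofReal (3 ^ A) * g₃ (x + y) := by
    filter_upwards [hae] with y hy
    have hj := jap_pos (x + y)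
    have hxy : 0 < ‖x + y‖ := norm_pos_iff.2 hy
    have hjn : jap (x + y) ^ (-B) ≤ ‖x + y‖ ^ (-B) :=
      Real.rpow_le_rpow_of_nonpos hxy (norm_le_jap _) (by linarith)
    by_cases h1 : ‖y‖ ≤ r / 2
    · refine le_trans ?_ (le_add_right (le_add_right le_rfl))
      have hk : k₁ (‖y‖ / r) = 1 := by
        have : ‖y‖ / r < 1 := by rw [div_lt_one hr0]; linarith
        simp [k₁, this]
      rw [← ENNReal.ofReal_mul (by positivity), hk, one_mul, mul_comm]
      refine ENNReal.ofReal_le_ofReal ?_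
      have : r ≤ ‖y‖ + jap (x + y) := by simpa [hr] using jap_le_add x (x + y)
      have h2 : jap (x + y) ^ (-B) ≤ (r / 2) ^ (-B) :=
        Real.rpow_le_rpow_of_nonpos (by positivity) (by linarith) (by linarith)
      gcongr
    · push Not at h1
      by_cases h2 : ‖x + y‖ < r
      · refine le_trans ?_ (le_add_right (le_add_left le_rfl))
        have hk : k₁ (‖x + y‖ / r) = 1 := by
          have : ‖x + y‖ / r < 1 := by rw [div_lt_one hr0]; linarith
          simp [k₁, this]
        rw [← ENNReal.ofReal_mul (by positivity), hk, one_mul]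
        refine ENNReal.ofReal_le_ofReal ?_
        have h3 : ‖y‖ ^ (-A) ≤ (r / 2) ^ (-A) :=
          Real.rpow_le_rpow_of_nonpos (by positivity) h1.le (by linarith)
        gcongr
      · push Not at h2
        refine le_trans ?_ (le_add_left le_rfl)
        have hk : k₂ (‖x + y‖ / r) = 1 := by
          have : 1 ≤ ‖x + y‖ / r := by rw [one_le_div hr0]; linarith
          simp [k₂, this]
        rw [← ENNReal.ofReal_mul (by positivity), hk, one_mul, neg_add, Real.rpow_add hxy,
          ← mul_assoc]
        refine ENNReal.ofReal_le_ofReal ?_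
        have h4 := norm_add_le x y
        have h3 : ‖y‖ ^ (-A) ≤ 3 ^ A * ‖x + y‖ ^ (-A) := by
          calc ‖y‖ ^ (-A) ≤ (‖x + y‖ / 3) ^ (-A) :=
                Real.rpow_le_rpow_of_nonpos (by positivity) (by linarith) (by linarith)
            _ = _ := by
                rw [Real.div_rpow (by positivity) (by norm_num),
                  Real.rpow_neg (by norm_num : (0:ℝ) ≤ 3)]
                field_simp
        gcongr
  refine (lintegral_mono_ae hpt).trans ?_
  rw [lintegral_add_left (by fun_prop), lintegral_add_left (by fun_prop),
    lintegral_const_mul' _ _ ENNReal.ofReal_ne_top, lintegral_const_mul' _ _ ENNReal.ofReal_ne_top,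
    lintegral_const_mul' _ _ ENNReal.ofReal_ne_top, lintegral_add_left_eq_self g₂ x,
    lintegral_add_left_eq_self g₃ x]
  refine (add_le_add (add_le_add (mul_le_mul_right (H1 r hr0) _) (mul_le_mul_right (H2 r hr0) _))
    (mul_le_mul_right (H3 r hr0) _)).trans ?_
  rw [← ENNReal.ofReal_mul (by positivity), ← ENNReal.ofReal_mul (by positivity),
    ← ENNReal.ofReal_mul (by positivity), ← ENNReal.ofReal_add (by positivity) (by positivity),
    ← ENNReal.ofReal_add (by positivity) (by positivity)]
  refine ENNReal.ofReal_le_ofReal (le_of_eq ?_)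
  have e1 : (r / 2) ^ (-B) * r ^ ((n : ℝ) - A) = 2 ^ B * r ^ ((n : ℝ) - A - B) := by
    rw [Real.div_rpow hr0.le (by norm_num), Real.rpow_neg (by norm_num : (0:ℝ) ≤ 2), sub_eq_add_neg _ B,
      Real.rpow_add hr0]
    field_simp
  have e2 : (r / 2) ^ (-A) * r ^ ((n : ℝ) - B) = 2 ^ A * r ^ ((n : ℝ) - A - B) := by
    rw [Real.div_rpow hr0.le (by norm_num), Real.rpow_neg (by norm_num : (0:ℝ) ≤ 2),
      show (n : ℝ) - A - B = (n - B) + (-A) by ring, Real.rpow_add hr0]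
    field_simp
  rw [show (n : ℝ) - (A + B) = n - A - B by ring]
  linear_combination C1 * e1 + C2 * e2

lemma holder_conj {p : ℝ} (hp : 1 < p) : p.HolderConjugate (p / (p - 1)) :=
  Real.HolderConjugate.conjExponent hp

/-- Hölder form of the Riesz potential estimate: data in `L^p_{δ-2}` have a Riesz potential
of order one bounded by a multiple of `⟨x⟩^{δ-1}`. -/
lemma riesz_holder (hn : 3 ≤ n) {p δ : ℝ} (hp : (n : ℝ) < p) (hδ1 : 2 - (n : ℝ) < δ) (hδ2 : δ < 0)
    {F : Type*} [NormedAddCommGroup F] :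
    ∃ C : ℝ, 0 ≤ C ∧ ∀ g : Euc n → F, Continuous g → ∀ (x : Euc n) (M : ℝ), 0 ≤ M →
      LpW p (δ - 2) g ≤ ENNReal.ofReal M →
      ∫⁻ y, ENNReal.ofReal (‖y‖ ^ (1 - (n : ℝ)) * ‖g (x + y)‖) ≤
        ENNReal.ofReal (C * jap x ^ (δ - 1) * M) := by
  have hn3 : (3 : ℝ) ≤ n := by exact_mod_cast hn
  have hp1 : 1 < p := by linarith
  have hp0 : 0 < p := by linarith
  set q := p / (p - 1) with hq
  have hpq : p.HolderConjugate q := holder_conj hp1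
  have hq0 : 0 < q := hpq.symm.pos
  have hpq' : 1 / q = 1 - 1 / p := by
    have := hpq.inv_add_inv_eq_one
    simp only [one_div]; linarith
  set s := -(δ - 2) - (n : ℝ) / p with hs
  have hnp : (n : ℝ) / p < 1 := by rw [div_lt_one hp0]; exact hp
  have hs0 : 0 < s := by rw [hs]; linarith
  have hnq : (n : ℝ) / q = n - n / p := by
    rw [div_eq_mul_one_div, hpq']; ring
  have hA : ((n : ℝ) - 1) * q < n := by
    rw [← lt_div_iff₀ hq0, hnq]; linarith
  have hB : s * q < n := by
    rw [← lt_div_iff₀ hq0, hnq, hs]; linarith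
  have hAB : (n : ℝ) < (n - 1) * q + s * q := by
    rw [← add_mul, ← div_lt_iff₀ hq0, hnq, hs]; linarith
  obtain ⟨C, hC, H⟩ := riesz_weight (n := n) (by omega) (mul_pos (by linarith) hq0) hA
    (mul_pos hs0 hq0) hB hAB
  refine ⟨C ^ (1 / q), by positivity, fun g hg x M hM hgM => ?_⟩
  let f₁ : Euc n → ℝ≥0∞ := fun y => ENNReal.ofReal (‖y‖ ^ (1 - (n : ℝ)) * jap (x + y) ^ (-s))
  let f₂ : Euc n → ℝ≥0∞ := fun y => ENNReal.ofReal (jap y ^ s * ‖g y‖)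
  have mf₁ : Measurable f₁ :=
    ((measurable_norm.pow_const _).mul
      ((continuous_jap_rpow _).comp (continuous_const_add x)).measurable).ennreal_ofReal
  have mf₂ : Measurable f₂ :=
    ((continuous_jap_rpow _).mul hg.norm).measurable.ennreal_ofReal
  have hsplit : ∀ y, ENNReal.ofReal (‖y‖ ^ (1 - (n : ℝ)) * ‖g (x + y)‖) = f₁ y * f₂ (x + y) := by
    intro y
    have hj := jap_pos (x + y)
    simp only [f₁, f₂]
    rw [← ENNReal.ofReal_mul (by positivity), Real.rpow_neg hj.le]
    congr 1
    field_simp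
  simp only [hsplit]
  refine (ENNReal.lintegral_mul_le_Lp_mul_Lq volume hpq.symm mf₁.aemeasurable
    (mf₂.comp (measurable_const_add x)).aemeasurable).trans ?_
  have h1 : (∫⁻ y, f₁ y ^ q) ^ (1 / q) ≤ ENNReal.ofReal (C ^ (1 / q) * jap x ^ (δ - 1)) := by
    have e : ∀ y, f₁ y ^ q =
        ENNReal.ofReal (‖y‖ ^ (-(((n : ℝ) - 1) * q)) * jap (x + y) ^ (-(s * q))) := by
      intro y
      have hj := jap_pos (x + y)
      simp only [f₁]
      rw [ENNReal.ofReal_rpow_of_nonneg (by positivity) hq0.le,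
        Real.mul_rpow (by positivity) (by positivity), ← Real.rpow_mul (norm_nonneg _),
        ← Real.rpow_mul hj.le]
      congr 3 <;> ring_nf
    simp only [e]
    refine (ENNReal.rpow_le_rpow (H x) (by positivity)).trans (le_of_eq ?_)
    have hj := jap_pos x
    rw [ENNReal.ofReal_rpow_of_nonneg (by positivity) (by positivity),
      Real.mul_rpow hC (by positivity), ← Real.rpow_mul hj.le]
    congr 3
    have : ((n : ℝ) - (n - 1) * q - s * q) * (1 / q) = n / q - (n - 1) - s := by field_simp
    rw [this, hnq, hs]; ring
  have h2 : (∫⁻ y, f₂ (x + y) ^ p) ^ (1 / p) ≤ ENNReal.ofReal M := by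
    rw [lintegral_add_left_eq_self (fun y => f₂ y ^ p) x]
    refine le_trans (le_of_eq ?_) hgM
    unfold LpW
    congr 2
    ext y
    have hj := jap_pos y
    simp only [f₂]
    rw [ENNReal.ofReal_rpow_of_nonneg (by positivity) hp0.le]
  refine (mul_le_mul' h1 h2).trans (le_of_eq ?_)
  have hj := jap_pos x
  rw [← ENNReal.ofReal_mul (by positivity)]

/-- Functions in `L^p_ν` with `ν < -1` are integrable against `⟨z⟩^{1-n}`. -/
lemma integrable_of_LpW (hn : 3 ≤ n) {p ν : ℝ} (hp : (n : ℝ) < p) (hν : ν < -1)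
    {h : Euc n → ℝ} (hc : Continuous h) (hf : LpW p ν h < ⊤) :
    Integrable (fun z => h z * jap z ^ (1 - (n : ℝ))) := by
  have hn3 : (3 : ℝ) ≤ n := by exact_mod_cast hn
  have hp1 : 1 < p := by linarith
  have hp0 : 0 < p := by linarith
  set q := p / (p - 1) with hq
  have hpq : p.HolderConjugate q := holder_conj hp1
  have hq0 : 0 < q := hpq.symm.pos
  have hpq' : 1 / q = 1 - 1 / p := by
    have := hpq.inv_add_inv_eq_one
    simp only [one_div]; linarith
  have hnq : (n : ℝ) / q = n - n / p := by
    rw [div_eq_mul_one_div, hpq']; ring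
  set s := -ν - (n : ℝ) / p with hs
  let f₁ : Euc n → ℝ≥0∞ := fun y => ENNReal.ofReal (jap y ^ (1 - (n : ℝ) - s))
  let f₂ : Euc n → ℝ≥0∞ := fun y => ENNReal.ofReal (jap y ^ s * ‖h y‖)
  have mf₁ : Measurable f₁ := (continuous_jap_rpow _).measurable.ennreal_ofReal
  have mf₂ : Measurable f₂ :=
    ((continuous_jap_rpow _).mul hc.norm).measurable.ennreal_ofReal
  refine ⟨(hc.mul (continuous_jap_rpow _)).aestronglyMeasurable, ?_⟩
  rw [hasFiniteIntegral_iff_enorm]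
  have hsplit : ∀ y, ‖h y * jap y ^ (1 - (n : ℝ))‖ₑ = f₁ y * f₂ y := by
    intro y
    have hj := jap_pos y
    simp only [f₁, f₂]
    rw [← ofReal_norm, ← ENNReal.ofReal_mul (by positivity), norm_mul, Real.norm_eq_abs (_ ^ _),
      abs_of_pos (by positivity), Real.rpow_sub hj _ s]
    congr 1
    field_simp
  simp only [hsplit]
  refine (ENNReal.lintegral_mul_le_Lp_mul_Lq volume hpq.symm mf₁.aemeasurable
    mf₂.aemeasurable).trans_lt ?_
  refine ENNReal.mul_lt_top (ENNReal.rpow_lt_top_of_nonneg (by positivity) ?_) ?_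
  · have hE : (n : ℝ) < (s + n - 1) * q := by
      rw [← div_lt_iff₀ hq0, hnq, hs]; linarith
    have hi : Integrable (fun y : Euc n => (1 + ‖y‖ ^ 2) ^ (-((s + n - 1) * q) / 2)) :=
      integrable_rpow_neg_one_add_norm_sq (μ := volume) (by simpa using hE)
    refine ((hi.lintegral_lt_top).trans_le' (le_of_eq ?_)).ne
    congr 1
    ext y
    have hj := jap_pos y
    have := Sp_eq_jap (-((s + n - 1) * q) / 2) y
    rw [Sp] at this
    rw [this]
    simp only [f₁]
    rw [ENNReal.ofReal_rpow_of_nonneg (by positivity) hq0.le, ← Real.rpow_mul hj.le]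
    congr 2; ring
  · refine lt_of_le_of_lt (le_of_eq ?_) hf
    unfold LpW
    congr 2
    ext y
    have hj := jap_pos y
    simp only [f₂]
    rw [ENNReal.ofReal_rpow_of_nonneg (by positivity) hp0.le]

end riesz

/-! ### The momentum constraint -/

section momentum
variable {n : ℕ}

lemma pd_coord_eq {W : Euc n → Euc n} (hW : ContDiff ℝ (⊤ : ℕ∞) W) (a i : Fin n) (x : Euc n) :
    pd a (fun y => W y i) x = fderiv ℝ W x (EuclideanSpace.single a 1) i := by
  have h : HasFDerivAt (fun y => W y i) ((EuclideanSpace.proj i : Euc n →L[ℝ] ℝ).comp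
      (fderiv ℝ W x)) x :=
    (EuclideanSpace.proj i : Euc n →L[ℝ] ℝ).hasFDerivAt.comp x
      ((hW.differentiable (by simp)) x).hasFDerivAt
  rw [pd, h.fderiv]
  rfl

lemma pd_pd_coord_eq {W : Euc n → Euc n} (hW : ContDiff ℝ (⊤ : ℕ∞) W) (a b i : Fin n) (x : Euc n) :
    pd a (pd b (fun y => W y i)) x =
      fderiv ℝ (fderiv ℝ W) x (EuclideanSpace.single a 1) (EuclideanSpace.single b 1) i := by
  have hd : Differentiable ℝ (fderiv ℝ W) :=
    (hW.fderiv_right (m := 1) (by norm_cast)).differentiable (by simp)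
  have e : pd b (fun y => W y i) = fun y => fderiv ℝ W y (EuclideanSpace.single b 1) i :=
    funext (pd_coord_eq hW b i)
  have h : HasFDerivAt (fun y => fderiv ℝ W y (EuclideanSpace.single b 1) i)
      ((EuclideanSpace.proj i : Euc n →L[ℝ] ℝ).comp
        ((ContinuousLinearMap.apply ℝ (Euc n) (EuclideanSpace.single b (1 : ℝ))).comp
          (fderiv ℝ (fderiv ℝ W) x))) x :=
    (EuclideanSpace.proj i : Euc n →L[ℝ] ℝ).hasFDerivAt.comp x
      ((ContinuousLinearMap.apply ℝ (Euc n) (EuclideanSpace.single b (1 : ℝ))).hasFDerivAt.comp x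
        (hd x).hasFDerivAt)
  rw [pd, e, h.fderiv]
  rfl

lemma abs_pd_le {W : Euc n → Euc n} (hW : ContDiff ℝ (⊤ : ℕ∞) W) (a i : Fin n) (x : Euc n) :
    |pd a (fun y => W y i) x| ≤ ‖iteratedFDeriv ℝ 1 W x‖ := by
  rw [pd_coord_eq hW, norm_iteratedFDeriv_one, ← Real.norm_eq_abs]
  refine (PiLp.norm_apply_le _ i).trans ?_
  simpa using (fderiv ℝ W x).le_opNorm (EuclideanSpace.single a 1)

lemma abs_pd_pd_le {W : Euc n → Euc n} (hW : ContDiff ℝ (⊤ : ℕ∞) W) (a b i : Fin n) (x : Euc n) :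
    |pd a (pd b (fun y => W y i)) x| ≤ ‖iteratedFDeriv ℝ 2 W x‖ := by
  rw [pd_pd_coord_eq hW, ← Real.norm_eq_abs]
  refine (PiLp.norm_apply_le _ i).trans ?_
  have h := (iteratedFDeriv ℝ 2 W x).le_opNorm
    ![EuclideanSpace.single a 1, EuclideanSpace.single b 1]
  simpa [iteratedFDeriv_two_apply, Fin.prod_univ_two] using h

lemma LpW_le {F : Type*} [NormedAddCommGroup F] {p ν s : ℝ} (hp : 0 < p) (f : Euc n → F)
    {G : Euc n → ℝ} (hs : -ν - (n : ℝ) / p = s) (h : ∀ x, ‖f x‖ ≤ G x) :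
    LpW p ν f ≤ (∫⁻ x, ENNReal.ofReal ((jap x ^ s * G x) ^ p)) ^ (1 / p) := by
  unfold LpW
  rw [hs]
  refine ENNReal.rpow_le_rpow (lintegral_mono fun x => ENNReal.ofReal_le_ofReal ?_) (by positivity)
  have := jap_pos x
  have := h x
  gcongr

lemma SobW_term_le {F : Type*} [NormedAddCommGroup F] [NormedSpace ℝ F] {k j : ℕ} (hj : j ≤ k)
    (p δ : ℝ) (f : Euc n → F) :
    (∫⁻ x, ENNReal.ofReal
      ((jap x ^ (-δ - (n : ℝ) / p + (j : ℝ)) * ‖iteratedFDeriv ℝ j f x‖) ^ p)) ^ (1 / p)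
      ≤ SobW k p δ f :=
  Finset.single_le_sum (f := fun j : ℕ => (∫⁻ x, ENNReal.ofReal
      ((jap x ^ (-δ - (n : ℝ) / p + (j : ℝ)) * ‖iteratedFDeriv ℝ j f x‖) ^ p)) ^ (1 / p))
    (fun _ _ => zero_le) (Finset.mem_range.2 (by omega))

lemma good_of_SobW (hn : 3 ≤ n) {p δ : ℝ} (hp : (n : ℝ) < p) (hδ : δ < 0)
    {W : Euc n → Euc n} (hW : ContDiff ℝ (⊤ : ℕ∞) W) (hS : SobW 2 p δ W < ⊤) (i : Fin n) :
    Good (fun y => W y i) := by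
  have hn3 : (3 : ℝ) ≤ n := by exact_mod_cast hn
  have hp0 : 0 < p := by linarith
  have hs : Smooth (fun y => W y i) := Smooth.comp_coord hW i
  refine ⟨hs, fun a => ?_, fun a b => ?_⟩
  · refine integrable_of_LpW hn hp (ν := δ - 1) (by linarith) (hs.pd a).continuous ?_
    refine lt_of_le_of_lt ?_ hS
    refine le_trans ?_ (SobW_term_le (k := 2) (j := 1) (by norm_num) p δ W)
    exact LpW_le hp0 _ (by push_cast; ring) (abs_pd_le hW a i)
  · refine integrable_of_LpW hn hp (ν := δ - 2) (by linarith) ((hs.pd b).pd a).continuous ?_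
    refine lt_of_le_of_lt ?_ hS
    refine le_trans ?_ (SobW_term_le (k := 2) (j := 2) (by norm_num) p δ W)
    exact LpW_le hp0 _ (by push_cast; ring) (abs_pd_pd_le hW a b i)

lemma vecLap_apply {W : Euc n → Euc n} (hW : ContDiff ℝ (⊤ : ℕ∞) W) (j : Fin n) (x : Euc n) :
    vecLap W x j = -lame (fun i y => W y i) j x := by
  have hs : ∀ i, Smooth (fun y => W y i) := Smooth.comp_coord hW
  have hdiv : Smooth (divg W) := by
    unfold divg
    exact ContDiff.sum fun i _ => (hs i).pd i
  have hpdiv : ∀ i, pd i (divg W) x = ∑ a, pd i (pd a (fun y => W y a)) x := by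
    intro i
    have := pd_sum Finset.univ (f := fun a => pd a (fun y => W y a)) (fun a => (hs a).pd a) i
    exact congrFun this x
  have h : ∀ i, pd i (fun y => confKill W y i j) x =
      pd i (pd i (fun y => W y j)) x + pd j (pd i (fun y => W y i)) x
        + (-(2 / (n : ℝ)) * (if i = j then 1 else 0)) * pd i (divg W) x := by
    intro i
    have e : (fun y => confKill W y i j) = fun y =>
        (fun y => pd i (fun y => W y j) y + pd j (fun y => W y i) y) y
          + (fun y => (-(2 / (n : ℝ)) * (if i = j then 1 else 0)) * divg W y) y := by
      funext y
      simp only [confKill, Matrix.of_apply]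
      ring
    have s1 : Smooth (fun y => pd i (fun y => W y j) y + pd j (fun y => W y i) y) :=
      ((hs j).pd i).add ((hs i).pd j)
    have s2 : Smooth (fun y => (-(2 / (n : ℝ)) * (if i = j then 1 else 0)) * divg W y) :=
      contDiff_const.mul hdiv
    rw [e, pd_add s1 s2, pd_add ((hs j).pd i) ((hs i).pd j), pd_const_mul hdiv,
      pd_comm (hs i) i j]
  have e0 : vecLap W x j = -∑ i, pd i (fun y => confKill W y i j) x := rfl
  rw [e0]
  simp only [h, lame, kap]
  congr 1
  rw [Finset.sum_add_distrib, Finset.sum_add_distrib, Finset.sum_add_distrib, ← Finset.mul_sum]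
  have : ∑ i, -(2 / (n : ℝ)) * (if i = j then 1 else 0) * pd i (divg W) x
      = -(2 / (n : ℝ)) * ∑ a, pd j (pd a (fun y => W y a)) x := by
    rw [← hpdiv j]
    simp
  rw [this]
  ring

lemma frob_le {M : Matrix (Fin n) (Fin n) ℝ} {D : ℝ} (hD : 0 ≤ D) (h : ∀ i j, |M i j| ≤ D) :
    frob M ≤ n * D := by
  unfold frob
  refine Real.sqrt_le_iff.2 ⟨by positivity, ?_⟩
  calc ∑ i, ∑ j, M i j ^ 2 ≤ ∑ _i : Fin n, ∑ _j : Fin n, D ^ 2 := by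
        refine Finset.sum_le_sum fun i _ => Finset.sum_le_sum fun j _ => ?_
        rw [← sq_abs]
        have := h i j
        gcongr
    _ = (n * D) ^ 2 := by simp; ring

/-- The a priori estimate for the momentum constraint: if `|Δ_L W| ≤ k |g| + |J|` with `g, J` in
`L^p_{δ-2}`, then `|𝒟W|` is bounded pointwise by a multiple of `⟨x⟩^{δ-1}`, linearly in the data. -/
lemma confKill_bound (hn : 3 ≤ n) {p δ : ℝ} (hp : (n : ℝ) < p) (hδ1 : 2 - (n : ℝ) < δ)
    (hδ2 : δ < 0) : ∃ C : ℝ, 0 ≤ C ∧ ∀ W : Euc n → Euc n, ContDiff ℝ (⊤ : ℕ∞) W →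
      SobW 2 p δ W < ⊤ → ∀ (g J : Euc n → Euc n), Continuous g → Continuous J →
      ∀ k T M : ℝ, 0 ≤ k → 0 ≤ T → 0 ≤ M → LpW p (δ - 2) g ≤ ENNReal.ofReal T →
      LpW p (δ - 2) J ≤ ENNReal.ofReal M → (∀ y, ‖vecLap W y‖ ≤ k * ‖g y‖ + ‖J y‖) →
      ∀ x, frob (confKill W x) ≤ C * jap x ^ (δ - 1) * (k * T + M) := by
  obtain ⟨C₁, hC₁, H₁⟩ := gradient_le_riesz hn
  obtain ⟨C₂, hC₂, H₂⟩ := riesz_holder hn hp hδ1 hδ2 (F := Euc n)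
  have hn0 : (0 : ℝ) < n := by exact_mod_cast (by omega : 0 < n)
  refine ⟨n * (4 * (C₁ * (n * C₂))), by positivity, fun W hW hS g J hg hJ k T M hk hT hM hgT hJM
    hle x => ?_⟩
  have hj := jap_pos x
  set I : ℝ := n * (k * (C₂ * jap x ^ (δ - 1) * T) + C₂ * jap x ^ (δ - 1) * M) with hI
  have hI0 : 0 ≤ I := by positivity
  have hsum : ∀ y, ∑ i, |lame (fun i y => W y i) i y| ≤ n * (k * ‖g y‖ + ‖J y‖) := by
    intro y
    calc ∑ i, |lame (fun i y => W y i) i y| ≤ ∑ _i : Fin n, (k * ‖g y‖ + ‖J y‖) := by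
          refine Finset.sum_le_sum fun i _ => ?_
          refine le_trans ?_ (hle y)
          rw [← abs_neg, ← vecLap_apply hW, ← Real.norm_eq_abs]
          exact PiLp.norm_apply_le _ i
      _ = _ := by simp [mul_add]
  have hint : ∫⁻ y, ENNReal.ofReal (‖y‖ ^ (1 - (n : ℝ)) *
      ∑ i, |lame (fun i y => W y i) i (x + y)|) ≤ ENNReal.ofReal I := by
    calc _ ≤ ∫⁻ y, (ENNReal.ofReal (n * k) *
            ENNReal.ofReal (‖y‖ ^ (1 - (n : ℝ)) * ‖g (x + y)‖) +
          ENNReal.ofReal n * ENNReal.ofReal (‖y‖ ^ (1 - (n : ℝ)) * ‖J (x + y)‖)) := by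
          refine lintegral_mono fun y => ?_
          rw [← ENNReal.ofReal_mul (by positivity), ← ENNReal.ofReal_mul (by positivity),
            ← ENNReal.ofReal_add (by positivity) (by positivity)]
          refine ENNReal.ofReal_le_ofReal ?_
          calc _ ≤ ‖y‖ ^ (1 - (n : ℝ)) * (n * (k * ‖g (x + y)‖ + ‖J (x + y)‖)) := by
                have := hsum (x + y)
                gcongr
            _ = _ := by ring
      _ = ENNReal.ofReal (n * k) *
            (∫⁻ y, ENNReal.ofReal (‖y‖ ^ (1 - (n : ℝ)) * ‖g (x + y)‖)) +
          ENNReal.ofReal n * ∫⁻ y, ENNReal.ofReal (‖y‖ ^ (1 - (n : ℝ)) * ‖J (x + y)‖) := by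
          have hm : Measurable (fun y =>
              ENNReal.ofReal (‖y‖ ^ (1 - (n : ℝ)) * ‖g (x + y)‖)) :=
            ((measurable_norm.pow_const _).mul
              (hg.norm.comp (continuous_const_add x)).measurable).ennreal_ofReal
          rw [lintegral_add_left (hm.const_mul _), lintegral_const_mul' _ _ ENNReal.ofReal_ne_top,
            lintegral_const_mul' _ _ ENNReal.ofReal_ne_top]
      _ ≤ ENNReal.ofReal (n * k) * ENNReal.ofReal (C₂ * jap x ^ (δ - 1) * T) +
          ENNReal.ofReal n * ENNReal.ofReal (C₂ * jap x ^ (δ - 1) * M) := by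
          gcongr
          · exact H₂ g hg x T hT hgT
          · exact H₂ J hJ x M hM hJM
      _ = ENNReal.ofReal I := by
          rw [← ENNReal.ofReal_mul (by positivity), ← ENNReal.ofReal_mul (by positivity),
            ← ENNReal.ofReal_add (by positivity) (by positivity), hI]
          congr 1; ring
  have hpd := H₁ (fun i y => W y i) (good_of_SobW hn hp hδ2 hW hS) x I hI0 hint
  have hdiv : |divg W x| ≤ n * (C₁ * I) := by
    unfold divg
    refine (Finset.abs_sum_le_sum_abs _ _).trans ?_
    calc _ ≤ ∑ _i : Fin n, C₁ * I := Finset.sum_le_sum fun i _ => hpd i i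
      _ = _ := by simp
  have hent : ∀ i j, |confKill W x i j| ≤ 4 * (C₁ * I) := by
    intro i j
    have h1 := hpd j i
    have h2 := hpd i j
    have h3 : |(2 / (n : ℝ)) * divg W x * (if i = j then 1 else 0)| ≤ 2 * (C₁ * I) := by
      rw [abs_mul, abs_mul, abs_of_pos (by positivity : (0 : ℝ) < 2 / n)]
      calc _ ≤ 2 / (n : ℝ) * (n * (C₁ * I)) * 1 := by
            gcongr
            split_ifs <;> simp
        _ = _ := by field_simp
    simp only [confKill, Matrix.of_apply]
    refine (abs_sub _ _).trans ?_
    have h4 := abs_add_le (pd i (fun y => W y j) x) (pd j (fun y => W y i) x)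
    linarith
  refine (frob_le (by positivity) hent).trans (le_of_eq ?_)
  rw [hI]; ring

end momentum

/-! ### The supersolution inequality -/

section assembly
variable {n : ℕ}

lemma frob_sq (M : Matrix (Fin n) (Fin n) ℝ) : frob M ^ 2 = ∑ i, ∑ j, M i j ^ 2 :=
  Real.sq_sqrt (by positivity)

lemma frob_add_sq_le (A B : Matrix (Fin n) (Fin n) ℝ) :
    frob (A + B) ^ 2 ≤ 2 * frob A ^ 2 + 2 * frob B ^ 2 := by
  simp only [frob_sq, Finset.mul_sum, ← Finset.sum_add_distrib]
  refine Finset.sum_le_sum fun i _ => Finset.sum_le_sum fun j _ => ?_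
  rw [Matrix.add_apply]
  nlinarith [sq_nonneg (A i j - B i j)]

lemma le_of_weighted_le {x : Euc n} {ν ε t : ℝ} (h : jap x ^ (-ν) * t ≤ ε) :
    t ≤ ε * jap x ^ ν := by
  have hj := jap_pos x
  rw [Real.rpow_neg hj.le, inv_mul_le_iff₀ (by positivity)] at h
  linarith

/-- The source `F` dominates a multiple of `⟨x⟩^{γ-2}`: explicitly for `‖x‖ ≥ 1`, and by
compactness on the unit ball. -/
lemma source_lower_bound {γ : ℝ} (hγ : γ < 0) {F : Euc n → ℝ} (hF : Continuous F)
    (hFpos : ∀ x, 0 < F x) (hFr : ∀ x : Euc n, 1 ≤ ‖x‖ → F x = ‖x‖ ^ (γ - 2)) :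
    ∃ f₀ : ℝ, 0 < f₀ ∧ ∀ x, f₀ * jap x ^ (γ - 2) ≤ F x := by
  obtain ⟨x₀, -, hx₀⟩ := (isCompact_closedBall (0 : Euc n) 1).exists_isMinOn
    ⟨0, by simp⟩ hF.continuousOn
  refine ⟨min (F x₀) 1, lt_min (hFpos x₀) one_pos, fun x => ?_⟩
  have hj := jap_pos x
  have hj0 : 0 ≤ jap x ^ (γ - 2) := by positivity
  rcases le_total 1 ‖x‖ with hx | hx
  · rw [hFr x hx]
    calc min (F x₀) 1 * jap x ^ (γ - 2) ≤ 1 * jap x ^ (γ - 2) := by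
          gcongr; exact min_le_right _ _
      _ ≤ _ := by
          rw [one_mul]
          exact Real.rpow_le_rpow_of_nonpos (by linarith) (norm_le_jap x) (by linarith)
  · have h1 : jap x ^ (γ - 2) ≤ 1 := Real.rpow_le_one_of_one_le_of_nonpos (one_le_jap x) (by linarith)
    calc min (F x₀) 1 * jap x ^ (γ - 2) ≤ F x₀ * 1 := by
          have := (hFpos x₀).le
          gcongr
          exact min_le_left _ _
      _ ≤ F x := by
          rw [mul_one]
          exact hx₀ (by simpa using hx)

lemma norm_gradient_eq (τ : Euc n → ℝ) (x : Euc n) :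
    ‖gradient τ x‖ = ‖iteratedFDeriv ℝ 1 τ x‖ := by
  rw [norm_iteratedFDeriv_one]
  exact (InnerProductSpace.toDual ℝ (Euc n)).symm.norm_map _

lemma continuous_gradient {τ : Euc n → ℝ} (hτ : ContDiff ℝ (⊤ : ℕ∞) τ) :
    Continuous (gradient τ) :=
  (InnerProductSpace.toDual ℝ (Euc n)).symm.continuous.comp (hτ.continuous_fderiv (by simp))

/-- Smallness of the scale `η`: since `N > 2`, both powers below have positive exponents. -/
lemma exists_scale {N f₀ a b : ℝ} (hN : 2 < N) (hf : 0 < f₀) :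
    ∃ η : ℝ, 0 < η ∧ a * η ^ (N - 2) + b * η ^ (N / 2 - 1) ≤ f₀ := by
  have c1 : Continuous (fun η : ℝ => a * η ^ (N - 2) + b * η ^ (N / 2 - 1)) :=
    (continuous_const.mul (Real.continuous_rpow_const (by linarith))).add
      (continuous_const.mul (Real.continuous_rpow_const (by linarith)))
  have l1 := (c1.tendsto 0).mono_left (nhdsWithin_le_nhds (s := Set.Ioi 0))
  rw [Real.zero_rpow (by linarith), Real.zero_rpow (by linarith)] at l1
  obtain ⟨η, h1, h2⟩ := ((l1.eventually (eventually_le_nhds (b := f₀) (by simpa using hf))).and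
    self_mem_nhdsWithin).exists
  exact ⟨η, h2, h1⟩

lemma two_lt_Nc (hn : 3 ≤ n) : 2 < Nc n := by
  have hn3 : (3 : ℝ) ≤ n := by exact_mod_cast hn
  unfold Nc
  rw [lt_div_iff₀ (by linarith)]
  linarith

end assembly

/-- **Far-from-CMC global supersolution (flat case of Theorem 4.1).** -/
theorem farCMC_global_supersolution (n : ℕ) (hn : 3 ≤ n) (p γ δ : ℝ)
    (hp : (n : ℝ) < p) (hγ1 : 2 - (n : ℝ) < γ) (hγ2 : γ < 0) (hδ : δ = γ / 2)
    (F Ψ : Euc n → ℝ) (a b : ℝ)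
    (hF : ContDiff ℝ (⊤ : ℕ∞) F) (hFpos : ∀ x, 0 < F x)
    (hFr : ∀ x : Euc n, 1 ≤ ‖x‖ → F x = ‖x‖ ^ (γ - 2))
    (hΨ : ContDiff ℝ (⊤ : ℕ∞) Ψ) (hΨeq : ∀ x, lap Ψ x = -F x)
    (hΨpos : ∀ x, 0 < 1 + Ψ x)
    (ha : 0 < a) (hab : a ≤ b)
    (hΨbd : ∀ x, a * jap x ^ γ ≤ Ψ x ∧ Ψ x ≤ b * jap x ^ γ)
    (τ : Euc n → ℝ) (hτs : ContDiff ℝ (⊤ : ℕ∞) τ) (hτ : SobW 1 p (δ - 1) τ < ⊤) :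
    ∃ η > (0 : ℝ), ∃ ε > (0 : ℝ),
      ∀ (σ : Euc n → Matrix (Fin n) (Fin n) ℝ) (ρ : Euc n → ℝ) (J : Euc n → Euc n),
        SmoothMat σ → SymTT σ → LinfWM (δ - 1) σ ≤ ENNReal.ofReal ε →
        ContDiff ℝ (⊤ : ℕ∞) ρ → (∀ x, 0 ≤ ρ x) →
        LinfW (2 * δ - 2) ρ ≤ ENNReal.ofReal ε →
        ContDiff ℝ (⊤ : ℕ∞) J → LpW p (δ - 2) J ≤ ENNReal.ofReal ε →
        GlobalSuperSol p δ τ σ ρ J (fun x => η * (1 + Ψ x)) := by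
  have hn3 : (3 : ℝ) ≤ n := by exact_mod_cast hn
  have hp0 : 0 < p := by linarith
  have hδ1 : 2 - (n : ℝ) < δ := by rw [hδ]; linarith
  have hδ2 : δ < 0 := by rw [hδ]; linarith
  have hN := two_lt_Nc hn
  have hcc : 0 < cc n := by
    unfold cc
    exact div_pos (by linarith) (by linarith)
  have hbc : 0 < bc n := by
    unfold bc
    exact div_pos (by linarith) (by linarith)
  have hb : 0 < b := ha.trans_le hab
  set N := Nc n with hNdef
  obtain ⟨f₀, hf₀, hFlow⟩ := source_lower_bound hγ2 hF.continuous hFpos hFr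
  obtain ⟨C, hC, HC⟩ := confKill_bound hn hp hδ1 hδ2
  set T := (SobW 1 p (δ - 1) τ).toReal with hT
  have hT0 : 0 ≤ T := ENNReal.toReal_nonneg
  have hgT : LpW p (δ - 2) (gradient τ) ≤ ENNReal.ofReal T := by
    rw [hT, ENNReal.ofReal_toReal hτ.ne]
    refine le_trans ?_ (SobW_term_le (k := 1) (j := 1) le_rfl p (δ - 1) τ)
    exact LpW_le hp0 _ (by push_cast; ring) (fun x => (norm_gradient_eq τ x).le)
  set K₁ : ℝ := ((n : ℝ) - 1) / n * (1 + b) ^ N with hK₁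
  have hn1 : (0 : ℝ) ≤ ((n : ℝ) - 1) / n := div_nonneg (by linarith) (by linarith)
  have hK₁0 : 0 ≤ K₁ := by positivity
  set K₂ : ℝ := 2 + 2 * (C * (K₁ * T + 1)) ^ 2 with hK₂
  -- `η` absorbs the constants because the data enter with the factor `ε = η ^ N`.
  obtain ⟨η, hη, hsmall⟩ := exists_scale (a := cc n * K₂) (b := cc n) hN hf₀
  refine ⟨η, hη, η ^ N, by positivity, ?_⟩
  intro σ ρ J _ _ hσ _ hρ0 hρ hJs hJ φ _ hφ W hW hWS hmom x
  have hj := jap_pos x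
  have hε : 0 ≤ η ^ N := by positivity
  have hΨ0 : ∀ y, 0 ≤ Ψ y := fun y =>
    (mul_nonneg ha.le (Real.rpow_nonneg (jap_pos y).le γ)).trans (hΨbd y).1
  have hφb : ∀ y, φ y ≤ η * (1 + b) := by
    intro y
    have h1 : jap y ^ γ ≤ 1 := Real.rpow_le_one_of_one_le_of_nonpos (one_le_jap y) hγ2.le
    have h2 : Ψ y ≤ b := (hΨbd y).2.trans (mul_le_of_le_one_right hb.le h1)
    exact (hφ y).2.trans (mul_le_mul_of_nonneg_left (by linarith) hη.le)
  have hvec : ∀ y, ‖vecLap W y‖ ≤ K₁ * η ^ N * ‖gradient τ y‖ + ‖J y‖ := by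
    intro y
    have h1 : vecLap W y = -((((n : ℝ) - 1) / n * φ y ^ N) • gradient τ y + J y) := by
      have := hmom y
      rw [add_assoc] at this
      exact eq_neg_of_add_eq_zero_left this
    rw [h1, norm_neg]
    refine (norm_add_le _ _).trans ?_
    rw [norm_smul, Real.norm_eq_abs,
      abs_of_nonneg (mul_nonneg hn1 (Real.rpow_nonneg (hφ y).1.le _))]
    have h2 : φ y ^ N ≤ η ^ N * (1 + b) ^ N := by
      rw [← Real.mul_rpow hη.le (by linarith)]
      exact Real.rpow_le_rpow (hφ y).1.le (hφb y) (by linarith)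
    have h3 : ((n : ℝ) - 1) / n * φ y ^ N ≤ K₁ * η ^ N := by
      calc ((n : ℝ) - 1) / n * φ y ^ N ≤ ((n : ℝ) - 1) / n * (η ^ N * (1 + b) ^ N) := by gcongr
        _ = K₁ * η ^ N := by rw [hK₁]; ring
    exact add_le_add (mul_le_mul_of_nonneg_right h3 (norm_nonneg _)) le_rfl
  have hDW : frob (confKill W x) ≤ C * (K₁ * T + 1) * η ^ N * jap x ^ (δ - 1) := by
    refine (HC W hW hWS (gradient τ) J (continuous_gradient hτs) hJs.continuous (K₁ * η ^ N) T
      (η ^ N) (by positivity) hT0 hε hgT hJ hvec x).trans (le_of_eq ?_)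
    ring
  have hσx : frob (σ x) ≤ η ^ N * jap x ^ (δ - 1) := by
    refine le_of_weighted_le ?_
    rw [← ENNReal.ofReal_le_ofReal_iff hε]
    exact (le_iSup (fun x => ENNReal.ofReal (jap x ^ (-(δ - 1)) * frob (σ x))) x).trans hσ
  have hρx : ρ x ≤ η ^ N * jap x ^ (γ - 2) := by
    rw [show γ - 2 = 2 * δ - 2 by rw [hδ]; ring]
    refine le_of_weighted_le ?_
    rw [← ENNReal.ofReal_le_ofReal_iff hε]
    have := (le_iSup (fun x => ENNReal.ofReal (jap x ^ (-(2 * δ - 2)) * ‖ρ x‖)) x).trans hρ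
    rwa [Real.norm_eq_abs, abs_of_nonneg (hρ0 x)] at this
  have hjsq : (jap x ^ (δ - 1)) ^ 2 = jap x ^ (γ - 2) := by
    rw [← Real.rpow_natCast, ← Real.rpow_mul hj.le, hδ]
    congr 1; push_cast; ring
  have hfrob : frob (σ x + confKill W x) ^ 2 ≤ K₂ * (η ^ N) ^ 2 * jap x ^ (γ - 2) := by
    have f1 : frob (σ x) ^ 2 ≤ (η ^ N * jap x ^ (δ - 1)) ^ 2 :=
      pow_le_pow_left₀ (Real.sqrt_nonneg _) hσx 2
    have f2 : frob (confKill W x) ^ 2 ≤ (C * (K₁ * T + 1) * η ^ N * jap x ^ (δ - 1)) ^ 2 :=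
      pow_le_pow_left₀ (Real.sqrt_nonneg _) hDW 2
    refine (frob_add_sq_le _ _).trans ?_
    rw [← hjsq, hK₂]
    linarith
  have hlap : lap (fun x => η * (1 + Ψ x)) x = -(η * F x) := by
    have s1 : Smooth (fun x => 1 + Ψ x) := contDiff_const.add hΨ
    have h1 : ∀ i, pd i (fun x => η * (1 + Ψ x)) = fun x => η * pd i Ψ x := by
      intro i
      rw [pd_const_mul s1, pd_add contDiff_const hΨ, pd_const]
      simp
    have h2 : ∀ i, pd i (pd i (fun x => η * (1 + Ψ x))) x = η * pd i (pd i Ψ) x := by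
      intro i
      rw [h1, pd_const_mul (Smooth.pd hΨ i)]
    unfold lap
    simp only [h2]
    rw [← Finset.mul_sum]
    have := hΨeq x
    unfold lap at this
    rw [this]; ring
  have hφp : η ≤ η * (1 + Ψ x) := le_mul_of_one_le_right hη.le (by linarith [hΨ0 x])
  have hu0 : 0 < η * (1 + Ψ x) := hη.trans_le hφp
  have p1 : (η * (1 + Ψ x)) ^ (-N - 1) ≤ η ^ (-N - 1) :=
    Real.rpow_le_rpow_of_nonpos hη hφp (by linarith)
  have p2 : (η * (1 + Ψ x)) ^ (-N / 2) ≤ η ^ (-N / 2) :=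
    Real.rpow_le_rpow_of_nonpos hη hφp (by linarith)
  have q1 : (η ^ N) ^ 2 * η ^ (-N - 1) = η * η ^ (N - 2) := by
    rw [← Real.rpow_natCast, ← Real.rpow_mul hη.le, ← Real.rpow_add hη, ← Real.rpow_one_add' hη.le]
    · congr 1; push_cast; ring
    · intro h; linarith
  have q2 : η ^ N * η ^ (-N / 2) = η * η ^ (N / 2 - 1) := by
    rw [← Real.rpow_add hη, ← Real.rpow_one_add' hη.le]
    · congr 1; ring
    · intro h; linarith
  set X := jap x ^ (γ - 2) with hX
  have hX0 : 0 ≤ X := by positivity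
  have t1 : cc n * frob (σ x + confKill W x) ^ 2 * (η * (1 + Ψ x)) ^ (-N - 1)
      ≤ η * X * (cc n * K₂ * η ^ (N - 2)) := by
    calc _ ≤ cc n * (K₂ * (η ^ N) ^ 2 * X) * η ^ (-N - 1) := by gcongr
      _ = cc n * K₂ * X * ((η ^ N) ^ 2 * η ^ (-N - 1)) := by ring
      _ = _ := by rw [q1]; ring
  have t2 : cc n * ρ x * (η * (1 + Ψ x)) ^ (-N / 2) ≤ η * X * (cc n * η ^ (N / 2 - 1)) := by
    calc _ ≤ cc n * (η ^ N * X) * η ^ (-N / 2) := by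
          have := hρ0 x
          gcongr
      _ = cc n * X * (η ^ N * η ^ (-N / 2)) := by ring
      _ = _ := by rw [q2]; ring
  have t3 : 0 ≤ bc n * τ x ^ 2 * (η * (1 + Ψ x)) ^ (N - 1) := by positivity
  have t4 : η * (f₀ * X) ≤ η * F x := by
    have := hFlow x
    gcongr
  have t5 := mul_le_mul_of_nonneg_left hsmall (mul_nonneg hη.le hX0)
  unfold HamExpr
  rw [hlap, ← hNdef]
  linarith
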